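/- Let H = {rrr, bbb} (the patterns: a monochromatic red triangle and a monochromatic blue triangle). Then h_2(n, H) = Θ(√(n log n)): there exist constants C1, C2 > 0 and an integer n0 such that for all n ≥ n0, C1·√(n·log n) ≤ h_2(n, H) ≤ C2·√(n·log n), where log denotes the base-2 logarithm. -/

import Mathlib

/-- The three edge colors: red, blue, yellow. -/
inductive Col : Type
  | r | b | y
  deriving DecidableEq

/-- A (symmetric) 3-edge-coloring of the complete graph `K_n` on vertex set `Fin n`. -/
structure Coloring (n : ℕ) where
  col : Fin n → Fin n → Col
  symm : ∀ i j, col i j = col j i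

/-- The pattern (multiset of edge colors) of the triangle on vertices `u, v, w`. -/
def triPattern {n : ℕ} (c : Coloring n) (u v w : Fin n) : Multiset Col :=
  {c.col u v, c.col v w, c.col u w}

/-- The coloring `c` contains the pattern `P`: some triangle has color multiset `P`. -/
def Contains {n : ℕ} (c : Coloring n) (P : Multiset Col) : Prop :=
  ∃ u v w : Fin n, u ≠ v ∧ v ≠ w ∧ u ≠ w ∧ triPattern c u v w = P

/-- The coloring `c` avoids every pattern in the family `H`. -/
def Avoids {n : ℕ} (c : Coloring n) (H : Set (Multiset Col)) : Prop :=
  ∀ P ∈ H, ¬ Contains c P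

/-- A vertex set `S` is two-colored under `c`: the edges inside `S` use at most
two of the three colors, i.e. some color is missing on the edges inside `S`. -/
def TwoColored {n : ℕ} (c : Coloring n) (S : Finset (Fin n)) : Prop :=
  ∃ x : Col, ∀ i ∈ S, ∀ j ∈ S, i ≠ j → c.col i j ≠ x

/-- `h2 c` is the maximum size of a vertex set whose induced edges use at most
two of the three colors. -/
noncomputable def h2 {n : ℕ} (c : Coloring n) : ℕ :=
  sSup {k | ∃ S : Finset (Fin n), TwoColored c S ∧ S.card = k}

/-- `h2n n H = min { h2 c : c a 3-edge-coloring of K_n avoiding all patterns in H }`. -/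
noncomputable def h2n (n : ℕ) (H : Set (Multiset Col)) : ℕ :=
  sInf {m | ∃ c : Coloring n, Avoids c H ∧ h2 c = m}

/-- Pattern abbreviations. -/
def Prrr : Multiset Col := {Col.r, Col.r, Col.r}
def Pbbb : Multiset Col := {Col.b, Col.b, Col.b}
def Pyyy : Multiset Col := {Col.y, Col.y, Col.y}
def Prrb : Multiset Col := {Col.r, Col.r, Col.b}
def Prry : Multiset Col := {Col.r, Col.r, Col.y}
def Pbbr : Multiset Col := {Col.b, Col.b, Col.r}
def Pbby : Multiset Col := {Col.b, Col.b, Col.y}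
def Pyyr : Multiset Col := {Col.y, Col.y, Col.r}
def Pyyb : Multiset Col := {Col.y, Col.y, Col.b}
def Prby : Multiset Col := {Col.r, Col.b, Col.y}

/-!
In an `rrr`-avoiding colouring the red graph is triangle-free, so it has an independent set of size
of order `√(n log n)`, and such a set carries only two colours.

For the upper bound, take two edge-disjoint triangle-free graphs `R` and `B` on `n` vertices
without independent sets larger than order `√(n log n)`, and colour the remaining edges yellow. A
set without yellow edges consists of one of its vertices, its red neighbours and its blue
neighbours, and the last two sets are independent in `R` and in `B`.

To find `R` and `B` for `n = r ^ 10`, map the vertices to a set of `r ^ 9` points twice, by a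
coordinate projection and by a random map, both with fibres of size `O(r)`. With high probability,
every large set of vertices has a large image under one of the two maps. Each of `R` and `B` is
glued from two graphs on the points, one pulled back along each map. These are sparse random graphs
with a maximal family of edge-disjoint triangles deleted; before the gluing, pairs that could create
a triangle mixing the two maps, or a common edge of `R` and `B`, are discarded. Few pairs are lost
inside any one set, so by exponential moments every large set keeps an edge.
-/

section IndependentSets

open Finset SimpleGraph
open scoped Classical

theorem two_mul_sum_powerset_card {α : Type*} (X : Finset α) :
    2 * ∑ A ∈ X.powerset, #A = #X * 2 ^ #X := by
  have hcompl : ∑ A ∈ X.powerset, #(X \ A) = ∑ A ∈ X.powerset, #A :=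
    sum_nbij' (X \ ·) (X \ ·) (by simp) (by simp) (by simp +contextual)
      (by simp +contextual) (by simp)
  calc 2 * ∑ A ∈ X.powerset, #A = ∑ A ∈ X.powerset, (#(X \ A) + #A) := by
        rw [sum_add_distrib, hcompl, two_mul]
    _ = ∑ _A ∈ X.powerset, #X :=
        sum_congr rfl fun A hA => card_sdiff_add_card_eq_card (mem_powerset.1 hA)
    _ = #X * 2 ^ #X := by rw [sum_const, card_powerset, smul_eq_mul, mul_comm]

theorem mul_two_pow_add_one_le (j x : ℕ) :
    j * (2 ^ x + 1) ≤ 4 * 4 ^ j + 2 * (x * 2 ^ x) := by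
  have hj : j < 2 ^ j := Nat.lt_two_pow_self
  have hx : 1 ≤ 2 ^ x := Nat.one_le_two_pow
  rcases le_total x j with h | h
  · have hxj : 2 ^ x ≤ 2 ^ j := Nat.pow_le_pow_right two_pos h
    have hsq : 4 ^ j = 2 ^ j * 2 ^ j := by rw [← mul_pow]; rfl
    nlinarith
  · nlinarith [Nat.mul_le_mul_right (2 ^ x) h, Nat.mul_le_mul h hx, Nat.zero_le (4 ^ j)]

variable {V : Type*} {G : SimpleGraph V}

/-- The members of `W` outside the closed neighbourhood of `v`. -/
noncomputable def farPart (G : SimpleGraph V) (v : V) (W : Finset V) : Finset V :=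
  {u ∈ W | u ≠ v ∧ ¬G.Adj v u}

theorem mem_farPart {v u : V} {W : Finset V} :
    u ∈ farPart G v W ↔ u ∈ W ∧ u ≠ v ∧ ¬G.Adj v u := mem_filter

variable [Fintype V]

/-- The independent sets of `G`, collected in a finset: the sample space of Shearer's averaging
argument. -/
noncomputable def indepFinsets (G : SimpleGraph V) : Finset (Finset V) :=
  {U | G.IsIndepSet (U : Set V)}

/-- The neighbours of `v` that can be added to `H` without creating an edge to `H`. -/
noncomputable def freeNeighbors (G : SimpleGraph V) (v : V) (H : Finset V) : Finset V :=
  {u | G.Adj v u ∧ ∀ a ∈ H, ¬G.Adj a u}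

theorem mem_indepFinsets {W : Finset V} :
    W ∈ indepFinsets G ↔ ∀ a ∈ W, ∀ b ∈ W, ¬G.Adj a b := by
  simp only [indepFinsets, mem_filter, mem_univ, true_and]
  exact ⟨fun h _ ha _ hb hab => h ha hb hab.ne hab, fun h _ ha _ hb _ => h _ ha _ hb⟩

theorem mem_freeNeighbors {v u : V} {H : Finset V} :
    u ∈ freeNeighbors G v H ↔ G.Adj v u ∧ ∀ a ∈ H, ¬G.Adj a u := by
  simp [freeNeighbors]

theorem filter_adj_union_of_subset_freeNeighbors {v : V} {W A : Finset V}
    (hA : A ⊆ freeNeighbors G v (farPart G v W)) :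
    {u ∈ farPart G v W ∪ A | G.Adj v u} = A := by
  ext u
  have := fun h => mem_freeNeighbors.1 (@hA u h)
  simp only [mem_filter, mem_union, mem_farPart]
  tauto

/-- Triangle-freeness enters here: the free neighbours of `v` may be added in any combination. -/
theorem filter_farPart_indepFinsets (hG : G.CliqueFree 3) (v : V) {W : Finset V}
    (hW : W ∈ indepFinsets G) :
    {U ∈ indepFinsets G | farPart G v U = farPart G v W} =
      insert (insert v (farPart G v W))
        ((freeNeighbors G v (farPart G v W)).powerset.image (farPart G v W ∪ ·)) := by
  have hnbr : ∀ a b, G.Adj v a → G.Adj v b → ¬G.Adj a b := fun a b ha hb hab =>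
    hG {v, a, b} (is3Clique_triple_iff.2 ⟨ha, hb, hab⟩)
  rw [mem_indepFinsets] at hW
  ext U
  simp only [mem_filter, mem_insert, mem_image, mem_powerset, mem_indepFinsets]
  constructor
  · rintro ⟨hU, hfar⟩
    by_cases hv : v ∈ U
    · left
      grind [mem_farPart]
    · refine Or.inr ⟨{u ∈ U | G.Adj v u}, fun u hu => ?_, ?_⟩
      · grind [mem_farPart, mem_freeNeighbors]
      · grind [mem_farPart]
  · rintro (rfl | ⟨A, hA, rfl⟩)
    · constructor
      · grind [mem_farPart, G.irrefl, G.adj_comm]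
      · grind [mem_farPart]
    · have hfree := fun u hu => mem_freeNeighbors.1 (@hA u hu)
      constructor
      · grind [mem_farPart, G.irrefl, G.adj_comm]
      · grind [mem_farPart]

theorem mul_card_fiber_farPart_le (hG : G.CliqueFree 3) (v : V) (j : ℕ) {W : Finset V}
    (hW : W ∈ indepFinsets G) :
    j * #{U ∈ indepFinsets G | farPart G v U = farPart G v W} ≤
      ∑ U ∈ indepFinsets G with farPart G v U = farPart G v W,
        (4 * 4 ^ j * (if v ∈ U then 1 else 0) + 4 * #{u ∈ U | G.Adj v u}) := by
  set H := farPart G v W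
  set X := freeNeighbors G v H
  have hfilter : ∀ A ∈ X.powerset, {u ∈ H ∪ A | G.Adj v u} = A := fun A hA =>
    filter_adj_union_of_subset_freeNeighbors (mem_powerset.1 hA)
  have hinj : Set.InjOn (H ∪ ·) (X.powerset : Set (Finset V)) := fun A hA B hB hAB => by
    rw [← hfilter A hA, ← hfilter B hB]
    exact congrArg (filter (G.Adj v)) hAB
  have hnot : insert v H ∉ X.powerset.image (H ∪ ·) := by
    simp only [mem_image, mem_powerset, not_exists, not_and]
    intro A hA hAH
    have hv : v ∈ H ∪ A := hAH ▸ mem_insert_self v H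
    grind [mem_farPart, mem_freeNeighbors, G.irrefl]
  rw [filter_farPart_indepFinsets hG v hW, card_insert_of_notMem hnot, sum_insert hnot,
    card_image_of_injOn hinj, card_powerset, sum_image hinj]
  calc j * (2 ^ #X + 1) ≤ 4 * 4 ^ j + 2 * (#X * 2 ^ #X) := mul_two_pow_add_one_le j #X
    _ = 4 * 4 ^ j + ∑ A ∈ X.powerset, 4 * #A := by
        rw [← two_mul_sum_powerset_card, ← mul_sum]; ring
    _ ≤ _ := by
        refine add_le_add (by simp) (sum_le_sum fun A hA => ?_)
        rw [hfilter A hA]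
        exact Nat.le_add_left _ _

theorem mul_card_indepFinsets_le (hG : G.CliqueFree 3) (v : V) (j : ℕ) :
    j * #(indepFinsets G) ≤
      ∑ U ∈ indepFinsets G,
        (4 * 4 ^ j * (if v ∈ U then 1 else 0) + 4 * #{u ∈ U | G.Adj v u}) := by
  rw [card_eq_sum_card_image (farPart G v), mul_sum,
    ← sum_fiberwise_of_maps_to (s := indepFinsets G) fun _ => mem_image_of_mem (farPart G v)]
  refine sum_le_sum fun H hH => ?_
  obtain ⟨W, hW, rfl⟩ := mem_image.1 hH
  exact mul_card_fiber_farPart_le hG v j hW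

/-- Shearer's averaging argument, over all independent sets with equal weight. -/
theorem mul_card_le_indepNum (hG : G.CliqueFree 3) {j : ℕ} (hdeg : ∀ v, G.degree v ≤ 4 ^ j) :
    j * Fintype.card V ≤ 8 * 4 ^ j * G.indepNum := by
  have hweight : ∀ U ∈ indepFinsets G,
      ∑ v, (4 * 4 ^ j * (if v ∈ U then 1 else 0) + 4 * #{u ∈ U | G.Adj v u}) ≤
        8 * 4 ^ j * G.indepNum := by
    intro U hU
    have hUcard : #U ≤ G.indepNum := IsIndepSet.card_le_indepNum (mem_filter.1 hU).2
    have hedges : ∑ v, #{u ∈ U | G.Adj v u} ≤ #U * 4 ^ j :=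
      calc ∑ v, #{u ∈ U | G.Adj v u} = ∑ u ∈ U, G.degree u := by
            simp only [card_filter, ← card_neighborFinset_eq_degree, neighborFinset_eq_filter]
            rw [sum_comm]
            simp only [G.adj_comm]
        _ ≤ #U * 4 ^ j := by simpa using sum_le_card_nsmul U _ _ fun u _ => hdeg u
    rw [sum_add_distrib, ← mul_sum, ← mul_sum, Fintype.sum_ite_mem, sum_const, smul_eq_mul]
    nlinarith [Nat.mul_le_mul_right (4 ^ j) hUcard]
  have hne : 0 < #(indepFinsets G) :=
    card_pos.2 ⟨∅, by simp [mem_indepFinsets]⟩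
  refine Nat.le_of_mul_le_mul_left ?_ hne
  calc _ = ∑ _v : V, j * #(indepFinsets G) := by
        rw [sum_const, card_univ, smul_eq_mul]; ring
    _ ≤ _ := sum_le_sum fun v _ => mul_card_indepFinsets_le hG v j
    _ ≤ _ := by
        rw [sum_comm, ← smul_eq_mul]
        exact sum_le_card_nsmul _ _ _ hweight

theorem degree_le_indepNum (hG : G.CliqueFree 3) (v : V) : G.degree v ≤ G.indepNum := by
  rw [← card_neighborFinset_eq_degree]
  refine IsIndepSet.card_le_indepNum ?_
  rw [coe_neighborFinset]
  exact isIndepSet_neighborSet_of_triangleFree G hG v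

theorem sqrt_mul_logb_le_indepNum (hG : G.CliqueFree 3) {n : ℕ} (hV : Fintype.card V = n)
    (hn : 256 ≤ n) : 1 / 64 * √(n * Real.logb 2 n) ≤ G.indepNum := by
  have hn256 : (256 : ℝ) ≤ n := mod_cast hn
  have hn0 : (0 : ℝ) < n := by linarith
  set l := Real.logb 2 n with hl
  have hl8 : 8 ≤ l := by
    rw [hl, Real.le_logb_iff_rpow_le (by norm_num) hn0]
    exact le_trans (by norm_num) hn256
  set Q := √(n * l)
  have hQsq : Q * Q = n * l := Real.mul_self_sqrt (by positivity)
  have hQ1 : 1 ≤ Q := Real.one_le_sqrt.2 (by nlinarith)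
  obtain ⟨j, hjQ, hQj⟩ := exists_nat_pow_near hQ1 (show (1 : ℝ) < 4 by norm_num)
  have hlj : l / 8 ≤ j := by
    have hlt : l < (4 * (j + 1) : ℕ) := by
      rw [hl, Real.logb_lt_iff_lt_rpow (by norm_num) hn0, Real.rpow_natCast]
      calc (n : ℝ) ≤ Q * Q := by nlinarith
        _ < 4 ^ (j + 1) * 4 ^ (j + 1) := by gcongr
        _ = 2 ^ (4 * (j + 1)) := by rw [← mul_pow, pow_mul]; norm_num
    push_cast at hlt
    linarith
  by_cases hdeg : ∀ v, G.degree v ≤ 4 ^ j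
  · have hcount : (j * n : ℝ) ≤ 8 * 4 ^ j * G.indepNum :=
      mod_cast hV ▸ mul_card_le_indepNum hG hdeg
    refine le_of_mul_le_mul_left (a := Q) ?_ (by linarith)
    calc Q * (1 / 64 * Q) = 1 / 8 * (l / 8 * n) := by linarith
      _ ≤ 1 / 8 * (8 * 4 ^ j * G.indepNum) := by
          gcongr 1 / 8 * ?_
          exact (mul_le_mul_of_nonneg_right hlj hn0.le).trans hcount
      _ ≤ Q * G.indepNum := by nlinarith [(Nat.cast_nonneg G.indepNum : (0 : ℝ) ≤ _)]
  · push Not at hdeg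
    obtain ⟨v, hv⟩ := hdeg
    have hα : (4 : ℝ) ^ j ≤ G.indepNum := mod_cast hv.le.trans (degree_le_indepNum hG v)
    rw [pow_succ] at hQj
    linarith

end IndependentSets

section UniformProbability

open Finset
open scoped BigOperators

variable {Ω : Type*}

/-- The probability of an event when `ω : Ω` is uniformly distributed. Independence is expressed
by taking `Ω` to be a function type. -/
noncomputable def uniformProb (P : Ω → Prop) : ℝ :=
  Nat.card {ω // P ω} / Nat.card Ω

theorem uniformProb_eq_expect [Fintype Ω] (P : Ω → Prop) [DecidablePred P] :
    uniformProb P = 𝔼 ω, if P ω then 1 else 0 := by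
  rw [Fintype.expect_eq_sum_div_card, sum_boole, uniformProb, Nat.card_eq_fintype_card,
    Nat.card_eq_fintype_card, Fintype.card_subtype]

theorem uniformProb_mono [Finite Ω] {P Q : Ω → Prop} (h : ∀ ω, P ω → Q ω) :
    uniformProb P ≤ uniformProb Q := by
  unfold uniformProb
  gcongr
  exact Nat.card_le_card_of_injective _ (Subtype.map_injective h Function.injective_id)

theorem uniformProb_or_le [Finite Ω] (P Q : Ω → Prop) :
    uniformProb (fun ω => P ω ∨ Q ω) ≤ uniformProb P + uniformProb Q := by
  classical
  have := Fintype.ofFinite Ω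
  simp only [uniformProb_eq_expect, ← expect_add_distrib]
  refine expect_le_expect fun ω _ => ?_
  by_cases hP : P ω <;> by_cases hQ : Q ω <;> simp [hP, hQ]

theorem uniformProb_exists_mem_le [Finite Ω] {ι : Type*} (s : Finset ι) (P : ι → Ω → Prop) {c : ℝ}
    (h : ∀ i ∈ s, uniformProb (P i) ≤ c) :
    uniformProb (fun ω => ∃ i ∈ s, P i ω) ≤ #s * c := by
  classical
  induction s using Finset.induction_on with
  | empty => simp [uniformProb]
  | insert i s hi ih =>
    simp only [exists_mem_insert]
    rw [card_insert_of_notMem hi, Nat.cast_succ, add_one_mul, add_comm]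
    exact (uniformProb_or_le _ _).trans (add_le_add (h i (mem_insert_self i s))
      (ih fun j hj => h j (mem_insert_of_mem hj)))

theorem uniformProb_const_and_le {p : Prop} {Q : Ω → Prop} {c : ℝ} (hc : 0 ≤ c)
    (h : p → uniformProb Q ≤ c) : uniformProb (fun ω => p ∧ Q ω) ≤ c := by
  by_cases hp : p
  · simpa [hp] using h hp
  · simpa [hp, uniformProb] using hc

theorem uniformProb_le_expect_div [Fintype Ω] {P : Ω → Prop} {F : Ω → ℝ} {a : ℝ} (ha : 0 < a)
    (hF : ∀ ω, 0 ≤ F ω) (h : ∀ ω, P ω → a ≤ F ω) : uniformProb P ≤ (𝔼 ω, F ω) / a := by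
  classical
  rw [uniformProb_eq_expect, expect_div]
  refine expect_le_expect fun ω _ => ?_
  split_ifs with hP
  · exact (one_le_div ha).2 (h ω hP)
  · exact div_nonneg (hF ω) ha.le

theorem exists_not_of_uniformProb_lt_one [Finite Ω] [Nonempty Ω] {P : Ω → Prop}
    (h : uniformProb P < 1) : ∃ ω, ¬P ω := by
  by_contra! hP
  simp [uniformProb, hP] at h

theorem uniformProb_comp_equiv {Ω' : Type*} (e : Ω ≃ Ω') (P : Ω' → Prop) :
    uniformProb (fun ω => P (e ω)) = uniformProb P := by
  rw [uniformProb, uniformProb, Nat.card_congr e, Nat.card_congr (e.subtypeEquivOfSubtype (p := P))]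

variable {ι α : Type*}

theorem expect_prod_apply [Fintype ι] [DecidableEq ι] [Fintype α] (g : ι → α → ℝ) :
    𝔼 f : ι → α, ∏ i, g i (f i) = ∏ i, 𝔼 a, g i a := by
  simp only [Fintype.expect_eq_sum_div_card, prod_div_distrib, prod_univ_sum,
    Fintype.piFinset_univ]
  simp

theorem expect_apply [Fintype ι] [DecidableEq ι] [Fintype α] [Nonempty α] (i : ι) (g : α → ℝ) :
    𝔼 f : ι → α, g (f i) = 𝔼 a, g a := by
  have h := expect_prod_apply fun (k : ι) a => if k = i then g a else 1
  have hfactor : ∀ k, (𝔼 a, if k = i then g a else 1) = if k = i then 𝔼 a, g a else 1 := by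
    intro k
    split_ifs
    · rfl
    · exact Fintype.expect_one
  simpa [hfactor] using h

theorem uniformProb_forall_mem [Finite ι] [Fintype α] [Nonempty α] (A : Finset α)
    (T : Finset ι) :
    uniformProb (fun f : ι → α => ∀ i ∈ T, f i ∈ A) = ((#A : ℝ) / Fintype.card α) ^ #T := by
  classical
  have := Fintype.ofFinite ι
  have hfactor : ∀ i, (𝔼 a, if i ∈ T then if a ∈ A then (1 : ℝ) else 0 else 1) =
      if i ∈ T then (#A : ℝ) / Fintype.card α else 1 := by
    intro i
    split_ifs
    · simp [Fintype.expect_eq_sum_div_card]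
    · exact Fintype.expect_one
  calc uniformProb (fun f : ι → α => ∀ i ∈ T, f i ∈ A)
      = 𝔼 f : ι → α, ∏ i, if i ∈ T then if f i ∈ A then (1 : ℝ) else 0 else 1 := by
        rw [uniformProb_eq_expect]
        refine expect_congr rfl fun f _ => ?_
        rw [prod_ite_mem, univ_inter, prod_boole]
        congr
    _ = ((#A : ℝ) / Fintype.card α) ^ #T := by
        rw [expect_prod_apply fun i a => if i ∈ T then if a ∈ A then (1 : ℝ) else 0 else 1]
        simp only [hfactor]
        rw [prod_ite_mem, univ_inter, prod_const]

theorem uniformProb_le_card_filter_le [Finite ι] [Fintype α] [DecidableEq α] [Nonempty α]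
    (A : Finset α) (U : Finset ι) (t : ℕ) :
    uniformProb (fun f : ι → α => t ≤ #{i ∈ U | f i ∈ A}) ≤
      (#U).choose t * ((#A : ℝ) / Fintype.card α) ^ t := by
  calc uniformProb (fun f : ι → α => t ≤ #{i ∈ U | f i ∈ A})
      ≤ uniformProb (fun f : ι → α => ∃ T ∈ U.powersetCard t, ∀ i ∈ T, f i ∈ A) := by
        refine uniformProb_mono fun f hf => ?_
        obtain ⟨T, hT, hcard⟩ := exists_subset_card_eq hf
        exact ⟨T, mem_powersetCard.2 ⟨hT.trans (filter_subset _ _), hcard⟩,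
          fun i hi => (mem_filter.1 (hT hi)).2⟩
    _ ≤ #(U.powersetCard t) * ((#A : ℝ) / Fintype.card α) ^ t :=
        uniformProb_exists_mem_le _ _ fun T hT =>
          (uniformProb_forall_mem A T).trans_le (by rw [(mem_powersetCard.1 hT).2])
    _ = _ := by rw [card_powersetCard]

theorem uniformProb_pi_le_of_update [Finite ι] [DecidableEq ι] [Finite α] [Nonempty α] (i : ι)
    {Q : (ι → α) → Prop} {c : ℝ}
    (h : ∀ f, uniformProb (fun x => Q (Function.update f i x)) ≤ c) : uniformProb Q ≤ c := by
  classical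
  have := Fintype.ofFinite ι
  have := Fintype.ofFinite α
  let resample : (ι → α) × α ≃ (ι → α) × α :=
    Function.Involutive.toPerm (fun p => (Function.update p.1 i p.2, p.1 i)) fun p => by simp
  calc uniformProb Q = 𝔼 f, 𝔼 _x : α, if Q f then (1 : ℝ) else 0 := by
        simp only [Fintype.expect_const, uniformProb_eq_expect]
    _ = 𝔼 p : (ι → α) × α, if Q p.1 then (1 : ℝ) else 0 := by
        rw [← univ_product_univ, expect_product]
    _ = 𝔼 p : (ι → α) × α, if Q (Function.update p.1 i p.2) then (1 : ℝ) else 0 :=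
        (Fintype.expect_equiv resample _ _ fun _ => rfl).symm
    _ = 𝔼 f, uniformProb (fun x => Q (Function.update f i x)) := by
        simp only [uniformProb_eq_expect, ← univ_product_univ, expect_product]
    _ ≤ c := expect_le univ_nonempty fun f _ => h f

theorem choose_le_exp_mul_div_pow (n : ℕ) {t : ℕ} (ht : 0 < t) :
    (n.choose t : ℝ) ≤ (Real.exp 1 * n / t) ^ t := by
  have ht' : (0 : ℝ) < t := mod_cast ht
  have hfact : (t : ℝ) ^ t ≤ Real.exp 1 ^ t * t.factorial := by
    rw [← div_le_iff₀ (by positivity), ← Real.exp_nat_mul, mul_one]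
    exact Real.pow_div_factorial_le_exp (t : ℝ) ht'.le t
  refine (Nat.choose_le_pow_div t n).trans ?_
  rw [div_pow, mul_pow, div_le_div_iff₀ (by positivity) (by positivity)]
  nlinarith [pow_nonneg (Nat.cast_nonneg n : (0 : ℝ) ≤ n) t]

theorem choose_mul_pow_le_pow {n t : ℕ} (ht : 0 < t) {p c : ℝ} (hp : 0 ≤ p)
    (h : 3 * n * p ≤ c * t) : (n.choose t : ℝ) * p ^ t ≤ c ^ t := by
  have ht' : (0 : ℝ) < t := mod_cast ht
  calc (n.choose t : ℝ) * p ^ t ≤ (Real.exp 1 * n / t) ^ t * p ^ t := by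
        gcongr
        exact choose_le_exp_mul_div_pow n ht
    _ = (Real.exp 1 * n * p / t) ^ t := by rw [← mul_pow]; ring
    _ ≤ (3 * n * p / t) ^ t := by
        gcongr
        exact Real.exp_one_lt_three.le
    _ ≤ c ^ t := pow_le_pow_left₀ (by positivity) ((div_le_iff₀ ht').2 h) t

end UniformProbability

section Packing

open Finset

variable {β : Type*}

theorem exists_maximal_disjoint_subfamily (𝒯 : Finset (Finset β)) :
    ∃ 𝓕 ⊆ 𝒯, (𝓕 : Set (Finset β)).PairwiseDisjoint id ∧
      ∀ T ∈ 𝒯, T.Nonempty → ∃ T' ∈ 𝓕, ¬Disjoint T T' := by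
  classical
  let disjointFamilies : Finset (Finset (Finset β)) :=
    𝒯.powerset.filter fun 𝓕 => (𝓕 : Set (Finset β)).PairwiseDisjoint id
  obtain ⟨𝓕, h𝓕, hmax⟩ := exists_max_image disjointFamilies card
    ⟨∅, by simp [disjointFamilies]⟩
  rw [mem_filter, mem_powerset] at h𝓕
  refine ⟨𝓕, h𝓕.1, h𝓕.2, fun T hT hne => ?_⟩
  by_contra! hdisj
  have hmem : T ∉ 𝓕 := fun h => hne.ne_empty (disjoint_self.1 (hdisj T h))
  have hcard := hmax (insert T 𝓕) <| by
    rw [mem_filter, mem_powerset, coe_insert]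
    exact ⟨insert_subset hT h𝓕.1, h𝓕.2.insert fun T' hT' _ => hdisj T' hT'⟩
  rw [card_insert_of_notMem hmem] at hcard
  omega

/-- A maximal pairwise disjoint subfamily of `𝒯`. -/
noncomputable def packing (𝒯 : Finset (Finset β)) : Finset (Finset β) :=
  (exists_maximal_disjoint_subfamily 𝒯).choose

theorem packing_subset (𝒯 : Finset (Finset β)) : packing 𝒯 ⊆ 𝒯 :=
  (exists_maximal_disjoint_subfamily 𝒯).choose_spec.1

theorem pairwiseDisjoint_packing (𝒯 : Finset (Finset β)) :
    (packing 𝒯 : Set (Finset β)).PairwiseDisjoint id :=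
  (exists_maximal_disjoint_subfamily 𝒯).choose_spec.2.1

theorem exists_mem_packing_not_disjoint {𝒯 : Finset (Finset β)} {T : Finset β} (hT : T ∈ 𝒯)
    (hne : T.Nonempty) : ∃ T' ∈ packing 𝒯, ¬Disjoint T T' :=
  (exists_maximal_disjoint_subfamily 𝒯).choose_spec.2.2 T hT hne

variable [DecidableEq β]

/-- `Z` with the union of a maximal packing by members of `𝒯` deleted, so that no member of `𝒯`
survives. -/
noncomputable def prune (𝒯 : Finset (Finset β)) (Z : Finset β) : Finset β :=
  Z \ (packing {T ∈ 𝒯 | T ⊆ Z}).biUnion id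

theorem prune_subset (𝒯 : Finset (Finset β)) (Z : Finset β) : prune 𝒯 Z ⊆ Z := sdiff_subset

theorem not_subset_prune {𝒯 : Finset (Finset β)} {T Z : Finset β} (hT : T ∈ 𝒯)
    (hne : T.Nonempty) : ¬T ⊆ prune 𝒯 Z := by
  intro hTZ
  have hmem : T ∈ {T ∈ 𝒯 | T ⊆ Z} := mem_filter.2 ⟨hT, hTZ.trans (prune_subset 𝒯 Z)⟩
  obtain ⟨T', hT', hmeet⟩ := exists_mem_packing_not_disjoint hmem hne
  obtain ⟨e, he, he'⟩ := not_disjoint_iff.1 hmeet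
  exact (mem_sdiff.1 (hTZ he)).2 (mem_biUnion.2 ⟨T', hT', he'⟩)

theorem card_inter_le_of_disjoint_prune {𝒯 : Finset (Finset β)} {E Z : Finset β} {k : ℕ}
    (hk : ∀ T ∈ 𝒯, #T = k) (hE : Disjoint E (prune 𝒯 Z)) :
    #(E ∩ Z) ≤ k * #{T ∈ packing {T ∈ 𝒯 | T ⊆ Z} | ¬Disjoint T E} := by
  have hsub : E ∩ Z ⊆ {T ∈ packing {T ∈ 𝒯 | T ⊆ Z} | ¬Disjoint T E}.biUnion id := by
    intro e he
    rw [mem_inter] at he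
    have hdel : e ∉ prune 𝒯 Z := disjoint_left.1 hE he.1
    simp only [prune, mem_sdiff, he.2, true_and, not_not, mem_biUnion] at hdel
    obtain ⟨T, hT, heT⟩ := hdel
    exact mem_biUnion.2 ⟨T, mem_filter.2 ⟨hT, not_disjoint_iff.2 ⟨e, heT, he.1⟩⟩, heT⟩
  calc #(E ∩ Z) ≤ #{T ∈ packing {T ∈ 𝒯 | T ⊆ Z} | ¬Disjoint T E} * k := by
        refine (card_le_card hsub).trans (card_biUnion_le_card_mul _ _ _ fun T hT => ?_)
        exact (hk T (mem_filter.1 (packing_subset _ (mem_filter.1 hT).1)).1).le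
    _ = _ := mul_comm _ _

end Packing

section RandomSubsets

open Finset
open scoped BigOperators

variable {β : Type*} [Fintype β] {q : ℕ} [NeZero q]

/-- The zero set of `f`. For uniformly random `f : β → Fin q` it is a random subset of `β`
containing each point independently with probability `1 / q`. -/
noncomputable def zeros (f : β → Fin q) : Finset β := {e | f e = 0}

theorem mem_zeros {f : β → Fin q} {e : β} : e ∈ zeros f ↔ f e = 0 := by simp [zeros]

theorem uniformProb_subset_zeros (T : Finset β) :
    uniformProb (fun f : β → Fin q => T ⊆ zeros f) = (1 / q : ℝ) ^ #T := by
  simpa [subset_iff, mem_zeros] using uniformProb_forall_mem ({0} : Finset (Fin q)) T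

theorem uniformProb_exists_subset_zeros_le {𝒯 : Finset (Finset β)} {k : ℕ}
    (hk : ∀ T ∈ 𝒯, #T = k) :
    uniformProb (fun f : β → Fin q => ∃ T ∈ 𝒯, T ⊆ zeros f) ≤ #𝒯 * (1 / q : ℝ) ^ k :=
  uniformProb_exists_mem_le _ _ fun T hT => (uniformProb_subset_zeros T).trans_le (by rw [hk T hT])

theorem expect_ite_eq_zero (c : ℝ) : (𝔼 a : Fin q, if a = 0 then c else 0) = c / q := by
  rw [Fintype.expect_eq_sum_div_card]
  simp

variable [DecidableEq β]

theorem uniformProb_card_inter_zeros_le (E : Finset β) (k : ℕ) :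
    uniformProb (fun f : β → Fin q => #(E ∩ zeros f) ≤ k) ≤
      2 ^ k * Real.exp (-(#E / (2 * q))) := by
  have hq : (1 : ℝ) ≤ q := mod_cast NeZero.one_le
  let penalty (e : β) (a : Fin q) : ℝ := if e ∈ E then if a = 0 then 1 / 2 else 1 else 1
  have hprod (f : β → Fin q) : ∏ e, penalty e (f e) = (1 / 2) ^ #(E ∩ zeros f) := by
    simp only [penalty]
    rw [prod_ite_mem, univ_inter, prod_ite, prod_const_one, mul_one, prod_const]
    congr 2
    ext e
    simp [mem_zeros]
  have hfactor (e : β) : 𝔼 a, penalty e a = if e ∈ E then 1 - 1 / (2 * q : ℝ) else 1 := by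
    simp only [penalty]
    split_ifs
    · have hsplit (a : Fin q) :
          (if a = 0 then 1 / 2 else 1 : ℝ) = 1 - if a = 0 then 1 / 2 else 0 := by
        split_ifs <;> norm_num
      simp only [hsplit]
      rw [expect_sub_distrib, Fintype.expect_const, expect_ite_eq_zero, div_div]
    · exact Fintype.expect_one
  calc uniformProb (fun f : β → Fin q => #(E ∩ zeros f) ≤ k)
      ≤ (𝔼 f : β → Fin q, ∏ e, penalty e (f e)) / (1 / 2) ^ k := by
        refine uniformProb_le_expect_div (by positivity) (fun f => ?_) fun f hf => ?_
        · rw [hprod]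
          positivity
        · rw [hprod]
          exact pow_le_pow_of_le_one (by norm_num) (by norm_num) hf
    _ = 2 ^ k * (1 - 1 / (2 * q : ℝ)) ^ #E := by
        rw [expect_prod_apply]
        simp only [hfactor]
        rw [prod_ite_mem, univ_inter, prod_const, one_div_pow, div_div_eq_mul_div, div_one,
          mul_comm]
    _ ≤ 2 ^ k * Real.exp (-(1 / (2 * q))) ^ #E := by
        have hnonneg : (0 : ℝ) ≤ 1 - 1 / (2 * q) := by
          rw [sub_nonneg, div_le_one (by linarith)]
          linarith
        gcongr
        exact Real.one_sub_le_exp_neg _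
    _ = 2 ^ k * Real.exp (-(#E / (2 * q))) := by
        rw [← Real.exp_nat_mul]
        ring_nf

theorem uniformProb_exists_disjoint_zeros_le {𝒰 : Finset (Finset β)} {k : ℕ}
    (hk : ∀ T ∈ 𝒰, #T = k) (t : ℕ) :
    uniformProb (fun f : β → Fin q => ∃ 𝓢 ∈ 𝒰.powersetCard t,
      (𝓢 : Set (Finset β)).PairwiseDisjoint id ∧ 𝓢.biUnion id ⊆ zeros f) ≤
      (#𝒰).choose t * (1 / q : ℝ) ^ (k * t) := by
  rw [← card_powersetCard]
  refine uniformProb_exists_mem_le _ _ fun 𝓢 h𝓢 => ?_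
  obtain ⟨hsub, rfl⟩ := mem_powersetCard.1 h𝓢
  refine uniformProb_const_and_le (by positivity) fun hdisj => ?_
  have hcard : #(𝓢.biUnion id) = k * #𝓢 := by
    rw [card_biUnion hdisj, mul_comm]
    exact sum_const_nat fun T hT => hk T (hsub hT)
  rw [uniformProb_subset_zeros, hcard]

theorem uniformProb_disjoint_prune_zeros_le {𝒯 : Finset (Finset β)} {k : ℕ}
    (hk : ∀ T ∈ 𝒯, #T = k) (E : Finset β) (t : ℕ) :
    uniformProb (fun f : β → Fin q => Disjoint E (prune 𝒯 (zeros f))) ≤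
      2 ^ (k * t) * Real.exp (-(#E / (2 * q))) +
        (#{T ∈ 𝒯 | ¬Disjoint T E}).choose t * (1 / q : ℝ) ^ (k * t) := by
  have hsplit : ∀ f : β → Fin q, Disjoint E (prune 𝒯 (zeros f)) →
      #(E ∩ zeros f) ≤ k * t ∨ ∃ 𝓢 ∈ {T ∈ 𝒯 | ¬Disjoint T E}.powersetCard t,
        (𝓢 : Set (Finset β)).PairwiseDisjoint id ∧ 𝓢.biUnion id ⊆ zeros f := by
    intro f hf
    set 𝓟 := {T ∈ packing {T ∈ 𝒯 | T ⊆ zeros f} | ¬Disjoint T E}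
    rcases le_total #𝓟 t with ht | ht
    · exact .inl ((card_inter_le_of_disjoint_prune hk hf).trans (Nat.mul_le_mul_left k ht))
    · obtain ⟨𝓢, h𝓢, hcard⟩ := exists_subset_card_eq ht
      have hpack : 𝓢 ⊆ packing {T ∈ 𝒯 | T ⊆ zeros f} := h𝓢.trans (filter_subset _ _)
      have hmem : ∀ T ∈ 𝓢, T ∈ 𝒯 ∧ T ⊆ zeros f := fun T hT =>
        mem_filter.1 (packing_subset _ (hpack hT))
      refine .inr ⟨𝓢, mem_powersetCard.2 ⟨fun T hT => ?_, hcard⟩,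
        (pairwiseDisjoint_packing _).subset (coe_subset.2 hpack),
        biUnion_subset.2 fun T hT => (hmem T hT).2⟩
      exact mem_filter.2 ⟨(hmem T hT).1, (mem_filter.1 (h𝓢 hT)).2⟩
  refine (uniformProb_mono hsplit).trans ((uniformProb_or_le _ _).trans ?_)
  gcongr
  · exact uniformProb_card_inter_zeros_le E (k * t)
  · exact uniformProb_exists_disjoint_zeros_le (fun T hT => hk T (mem_filter.1 hT).1) t

end RandomSubsets

section TruncatedSquares

open Finset
open scoped BigOperators

theorem sq_mul_exp_le {s : ℝ} (hs : 0 ≤ s) :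
    s ^ 2 * Real.exp s ≤ 2 * (Real.exp (2 * s) - 1 - 2 * s) := by
  have hquad : 1 + s + s ^ 2 / 2 ≤ Real.exp s := Real.quadratic_le_exp_of_nonneg hs
  have hdouble : Real.exp (2 * s) = Real.exp s * Real.exp s := by rw [two_mul, Real.exp_add]
  rw [hdouble]
  nlinarith [mul_nonneg hs (by nlinarith : 0 ≤ Real.exp s - 1)]

theorem exp_le_one_add_add_sq {u : ℝ} (h0 : 0 ≤ u) (h1 : u ≤ 1) :
    Real.exp u ≤ 1 + u + u ^ 2 := by
  have h := Real.abs_exp_sub_one_sub_id_le ((abs_of_nonneg h0).trans_le h1)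
  linarith [(abs_le.1 h).2]

/-- The square of `z`, replaced by `0` when `z` exceeds the threshold `a`. -/
noncomputable def truncSq (a z : ℝ) : ℝ := if z ≤ a then z ^ 2 else 0

/- The factor `exp (l * z ^ 2)` is at most `exp (l * a * z)` below the threshold, so the moment of a
truncated square is controlled by the moment generating function of `z` itself. -/
theorem exp_mul_truncSq_le {l a z : ℝ} (hl : 0 < l) (ha : 0 < a) (hz : 0 ≤ z) :
    Real.exp (l * truncSq a z) ≤ 1 + 2 * l / (l * a) ^ 2 *
      (Real.exp (2 * (l * a) * z) - 1 - 2 * (l * a) * z) := by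
  have hmain : l * z ^ 2 * Real.exp (l * a * z) ≤ 2 * l / (l * a) ^ 2 *
      (Real.exp (2 * (l * a) * z) - 1 - 2 * (l * a) * z) := by
    calc l * z ^ 2 * Real.exp (l * a * z)
        = l / (l * a) ^ 2 * ((l * a * z) ^ 2 * Real.exp (l * a * z)) := by field_simp
      _ ≤ l / (l * a) ^ 2 * (2 * (Real.exp (2 * (l * a * z)) - 1 - 2 * (l * a * z))) := by
          exact mul_le_mul_of_nonneg_left (sq_mul_exp_le (by positivity)) (by positivity)
      _ = _ := by
          rw [← mul_assoc 2 (l * a) z]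
          ring
  refine le_trans ?_ (add_le_add_right hmain 1)
  rw [truncSq]
  split_ifs with hza
  · have htrunc : l * z ^ 2 ≤ l * a * z := by
      rw [sq, ← mul_assoc, mul_right_comm]
      gcongr
    have hself : Real.exp (l * z ^ 2) ≤ 1 + l * z ^ 2 * Real.exp (l * z ^ 2) := by
      have h := mul_le_mul_of_nonneg_right (Real.one_sub_le_exp_neg (l * z ^ 2))
        (Real.exp_pos (l * z ^ 2)).le
      rw [← Real.exp_add, neg_add_cancel, Real.exp_zero] at h
      linarith
    refine hself.trans ?_
    gcongr
  · rw [mul_zero, Real.exp_zero]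
    exact le_add_of_nonneg_right (by positivity)

variable {X : Type*} [Fintype X] {q : ℕ} [NeZero q]

theorem expect_sum_zeros [DecidableEq X] (w : X → ℝ) :
    𝔼 g : X → Fin q, ∑ y ∈ zeros g, w y = (∑ y, w y) / q := by
  have hsum (g : X → Fin q) : ∑ y ∈ zeros g, w y = ∑ y, if g y = 0 then w y else 0 := by
    rw [zeros, sum_filter]
  simp only [hsum]
  rw [expect_sum_comm, sum_div]
  refine sum_congr rfl fun y _ => ?_
  rw [expect_apply y fun a : Fin q => if a = 0 then w y else 0, expect_ite_eq_zero]

theorem expect_exp_mul_sum_zeros [DecidableEq X] (w : X → ℝ) (θ : ℝ) :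
    𝔼 g : X → Fin q, Real.exp (θ * ∑ y ∈ zeros g, w y) =
      ∏ y, (1 + (Real.exp (θ * w y) - 1) / q) := by
  have hexp (g : X → Fin q) : Real.exp (θ * ∑ y ∈ zeros g, w y) =
      ∏ y, (1 + if g y = 0 then Real.exp (θ * w y) - 1 else 0) := by
    rw [zeros, sum_filter, mul_sum, Real.exp_sum]
    refine prod_congr rfl fun y _ => ?_
    split_ifs <;> simp
  simp only [hexp]
  rw [expect_prod_apply fun y a => 1 + if a = 0 then Real.exp (θ * w y) - 1 else 0]
  refine prod_congr rfl fun y _ => ?_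
  rw [expect_add_distrib, Fintype.expect_const, expect_ite_eq_zero]

variable {w : X → ℝ} {b : ℝ}

theorem expect_exp_mul_sum_zeros_le [DecidableEq X] (hw : ∀ y, 0 ≤ w y) (hwb : ∀ y, w y ≤ b)
    {θ : ℝ} (hθ : 0 ≤ θ) (hθb : θ * b ≤ 1) :
    𝔼 g : X → Fin q, Real.exp (θ * ∑ y ∈ zeros g, w y) ≤
      Real.exp (((∑ y, w y) / q) * (θ + θ ^ 2 * b)) := by
  rw [expect_exp_mul_sum_zeros, sum_div, sum_mul, Real.exp_sum]
  refine prod_le_prod (fun y _ => ?_) fun y _ => ?_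
  · have hone : 1 ≤ Real.exp (θ * w y) := Real.one_le_exp (mul_nonneg hθ (hw y))
    have : 0 ≤ (Real.exp (θ * w y) - 1) / q := div_nonneg (by linarith) q.cast_nonneg
    linarith
  · have hle : θ * w y ≤ 1 := (mul_le_mul_of_nonneg_left (hwb y) hθ).trans hθb
    have hsq : θ ^ 2 * w y * w y ≤ θ ^ 2 * w y * b :=
      mul_le_mul_of_nonneg_left (hwb y) (mul_nonneg (sq_nonneg θ) (hw y))
    have hexp : Real.exp (θ * w y) - 1 ≤ w y * (θ + θ ^ 2 * b) := by
      linarith [exp_le_one_add_add_sq (mul_nonneg hθ (hw y)) hle]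
    calc 1 + (Real.exp (θ * w y) - 1) / q ≤ 1 + w y * (θ + θ ^ 2 * b) / q := by gcongr
      _ = w y / q * (θ + θ ^ 2 * b) + 1 := by ring
      _ ≤ _ := Real.add_one_le_exp _

theorem expect_exp_sub_one_sub_le [DecidableEq X] (hw : ∀ y, 0 ≤ w y) (hwb : ∀ y, w y ≤ b)
    {θ : ℝ} (hθ : 0 ≤ θ) (hθb : θ * b ≤ 1) (hθq : 2 * θ * ((∑ y, w y) / q) ≤ 1) :
    (𝔼 g : X → Fin q, Real.exp (θ * ∑ y ∈ zeros g, w y)) - 1 - θ * ((∑ y, w y) / q) ≤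
      θ ^ 2 * (b * ((∑ y, w y) / q) + 4 * ((∑ y, w y) / q) ^ 2) := by
  have hmgf := expect_exp_mul_sum_zeros_le (q := q) hw hwb hθ hθb
  have hμ : 0 ≤ (∑ y, w y) / q := div_nonneg (sum_nonneg fun y _ => hw y) q.cast_nonneg
  have hbμ : 0 ≤ b * ((∑ y, w y) / q) := by
    rcases isEmpty_or_nonempty X with hX | ⟨⟨y⟩⟩
    · simp
    · exact mul_nonneg ((hw y).trans (hwb y)) hμ
  set μ := (∑ y, w y) / q
  have hnonneg : 0 ≤ μ * (θ + θ ^ 2 * b) := by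
    nlinarith [mul_nonneg hθ hμ, mul_nonneg (sq_nonneg θ) hbμ]
  have hle : μ * (θ + θ ^ 2 * b) ≤ 2 * θ * μ := by
    nlinarith [mul_le_mul_of_nonneg_right hθb (mul_nonneg hθ hμ)]
  have hexp := exp_le_one_add_add_sq hnonneg (hle.trans hθq)
  nlinarith [pow_le_pow_left₀ hnonneg hle 2]

theorem expect_exp_mul_truncSq_le [DecidableEq X] (hw : ∀ y, 0 ≤ w y) (hwb : ∀ y, w y ≤ b)
    {l a : ℝ} (hl : 0 < l) (ha : 0 < a)
    (hb : 2 * (l * a) * b ≤ 1) (hq : 2 * (2 * (l * a)) * ((∑ y, w y) / q) ≤ 1) :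
    𝔼 g : X → Fin q, Real.exp (l * truncSq a (∑ y ∈ zeros g, w y)) ≤
      1 + 8 * l * (b * ((∑ y, w y) / q) + 4 * ((∑ y, w y) / q) ^ 2) := by
  set δ := l * a
  have hδ0 : 0 < δ := by positivity
  calc 𝔼 g : X → Fin q, Real.exp (l * truncSq a (∑ y ∈ zeros g, w y))
      ≤ 𝔼 g : X → Fin q, (1 + 2 * l / δ ^ 2 * (Real.exp (2 * δ * ∑ y ∈ zeros g, w y) - 1 -
          2 * δ * ∑ y ∈ zeros g, w y)) :=
        expect_le_expect fun g _ => exp_mul_truncSq_le hl ha (sum_nonneg fun y _ => hw y)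
    _ = 1 + 2 * l / δ ^ 2 * ((𝔼 g : X → Fin q, Real.exp (2 * δ * ∑ y ∈ zeros g, w y)) - 1 -
          2 * δ * ((∑ y, w y) / q)) := by
        rw [expect_add_distrib, ← mul_expect, expect_sub_distrib, expect_sub_distrib, ← mul_expect,
          expect_sum_zeros, Fintype.expect_const]
    _ ≤ 1 + 2 * l / δ ^ 2 *
          ((2 * δ) ^ 2 * (b * ((∑ y, w y) / q) + 4 * ((∑ y, w y) / q) ^ 2)) := by
        gcongr
        exact expect_exp_sub_one_sub_le hw hwb (by positivity) hb hq
    _ = _ := by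
        field_simp
        ring

theorem uniformProb_le_sum_truncSq_le {ι : Type*} [Fintype ι]
    (hw : ∀ y, 0 ≤ w y) (hwb : ∀ y, w y ≤ b) {l a c : ℝ} (hl : 0 < l) (ha : 0 < a)
    (hb : 2 * (l * a) * b ≤ 1) (hq : 2 * (2 * (l * a)) * ((∑ y, w y) / q) ≤ 1)
    (hc : Fintype.card ι * (8 * (b * ((∑ y, w y) / q) + 4 * ((∑ y, w y) / q) ^ 2)) ≤ c / 2) :
    uniformProb (fun f : ι → X → Fin q => c ≤ ∑ i, truncSq a (∑ y ∈ zeros (f i), w y)) ≤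
      Real.exp (-(l * c / 2)) := by
  classical
  set m := 8 * (b * ((∑ y, w y) / q) + 4 * ((∑ y, w y) / q) ^ 2) with hm
  have hrow : 𝔼 g : X → Fin q, Real.exp (l * truncSq a (∑ y ∈ zeros g, w y)) ≤
      Real.exp (l * m) := by
    refine (expect_exp_mul_truncSq_le hw hwb hl ha hb hq).trans ?_
    linarith [Real.add_one_le_exp (l * m)]
  calc uniformProb (fun f : ι → X → Fin q => c ≤ ∑ i, truncSq a (∑ y ∈ zeros (f i), w y))
      ≤ (𝔼 f : ι → X → Fin q, ∏ i, Real.exp (l * truncSq a (∑ y ∈ zeros (f i), w y))) /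
          Real.exp (l * c) := by
        refine uniformProb_le_expect_div (Real.exp_pos _) (fun f => by positivity) fun f hf => ?_
        rw [← Real.exp_sum, ← mul_sum]
        gcongr
    _ = (𝔼 g : X → Fin q, Real.exp (l * truncSq a (∑ y ∈ zeros g, w y))) ^ Fintype.card ι /
          Real.exp (l * c) := by
        rw [expect_prod_apply fun _ g => Real.exp (l * truncSq a (∑ y ∈ zeros g, w y)), prod_const,
          card_univ]
    _ ≤ Real.exp (l * m) ^ Fintype.card ι / Real.exp (l * c) := by
        gcongr
    _ = Real.exp (l * (Fintype.card ι * m) - l * c) := by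
        rw [← Real.exp_nat_mul, ← Real.exp_sub]
        ring_nf
    _ ≤ Real.exp (-(l * c / 2)) := by
        gcongr
        linarith [mul_le_mul_of_nonneg_left hc hl.le]

end TruncatedSquares

section RowRegularity

open Finset

theorem sq_sum_card_filter_le {α β : Type*} (r : α → β → Prop)
    [∀ x u, Decidable (r x u)] (J : Finset α) (S : Finset β) :
    (∑ x ∈ J, #{u ∈ S | r x u}) ^ 2 ≤
      #S * ∑ p ∈ J ×ˢ J, #{u ∈ S | r p.1 u ∧ r p.2 u} := by
  have hdouble : ∑ x ∈ J, #{u ∈ S | r x u} = ∑ u ∈ S, #{x ∈ J | r x u} :=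
    sum_card_bipartiteAbove_eq_sum_card_bipartiteBelow r
  have hpairs : ∑ p ∈ J ×ˢ J, #{u ∈ S | r p.1 u ∧ r p.2 u} = ∑ u ∈ S, #{x ∈ J | r x u} ^ 2 := by
    refine (sum_card_bipartiteAbove_eq_sum_card_bipartiteBelow
      fun (p : α × α) u => r p.1 u ∧ r p.2 u).trans (sum_congr rfl fun u _ => ?_)
    rw [sq, ← card_product, ← filter_product]
    rfl
  rw [hdouble, hpairs]
  exact sq_sum_le_card_mul_sum_sq

/- Cauchy–Schwarz: distinct rows that overlap little cannot all be heavy. -/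
theorem sum_card_filter_le_two_mul {α β : Type*} (r : α → β → Prop)
    [∀ x u, Decidable (r x u)] (J : Finset α) (S : Finset β) {a : ℝ} {k : ℕ}
    (ha : 0 ≤ a) (hJ : ∀ x ∈ J, a ≤ #{u ∈ S | r x u})
    (hk : ∀ x x', x ≠ x' → #{u ∈ S | r x u ∧ r x' u} ≤ k) (hak : #S * k ≤ a ^ 2 / 2) :
    ∑ x ∈ J, (#{u ∈ S | r x u} : ℝ) ≤ 2 * #S := by
  set M := ∑ x ∈ J, #{u ∈ S | r x u} with hM
  classical
  have hoverlap : ∑ p ∈ J ×ˢ J, #{u ∈ S | r p.1 u ∧ r p.2 u} ≤ M + #J ^ 2 * k := by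
    calc ∑ p ∈ J ×ˢ J, #{u ∈ S | r p.1 u ∧ r p.2 u}
        ≤ ∑ p ∈ J ×ˢ J, ((if p.1 = p.2 then #{u ∈ S | r p.1 u} else 0) + k) := by
          refine sum_le_sum fun p _ => ?_
          split_ifs with hp
          · simp [hp]
          · exact (hk _ _ hp).trans (Nat.le_add_left _ _)
      _ = M + #J ^ 2 * k := by
          rw [sum_add_distrib, sum_product, sum_const, card_product, smul_eq_mul, ← sq]
          simp only [sum_ite_eq, sum_ite_mem, inter_self, hM]
  have hsq : (M : ℝ) ^ 2 ≤ #S * (M + #J ^ 2 * k) := mod_cast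
    (sq_sum_card_filter_le r J S).trans (Nat.mul_le_mul_left _ hoverlap)
  have hlower : #J * a ≤ (M : ℝ) := by
    rw [hM, Nat.cast_sum, ← nsmul_eq_mul]
    exact card_nsmul_le_sum _ _ _ hJ
  have hlower_sq : (#J * a) ^ 2 ≤ (M : ℝ) ^ 2 := pow_le_pow_left₀ (by positivity) hlower 2
  have hhalf : (M : ℝ) ^ 2 ≤ 2 * #S * M := by
    linarith [mul_le_mul_of_nonneg_left hak (sq_nonneg (#J : ℝ))]
  have hM' : ∑ x ∈ J, (#{u ∈ S | r x u} : ℝ) = M := by rw [hM, Nat.cast_sum]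
  rw [hM']
  by_contra! hlt
  have hpos : (0 : ℝ) < M := hlt.trans_le' (by positivity)
  linarith [mul_lt_mul_of_pos_right hlt hpos]

variable {X V : Type*} [DecidableEq X] [Fintype V]

theorem card_filter_map_mem_le {π : V → X} {b : ℕ} (hb : ∀ y, #{v | π v = y} ≤ b)
    (S : Finset V) (R : Finset X) : #{u ∈ S | π u ∈ R} ≤ b * #R := by
  refine card_le_mul_card_image_of_maps_to (fun u hu => (mem_filter.1 hu).2) b fun y _ => ?_
  exact (card_le_card (filter_subset_filter _ (subset_univ _))).trans (hb y)

variable [Fintype X]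

/-- The number of `u ∈ S` whose projection lies in the row of `Z` indexed by `x`. -/
noncomputable def rowCount (Z : Finset (X × X)) (π : V → X) (S : Finset V) (x : X) : ℕ :=
  #{u ∈ S | (x, π u) ∈ Z}

/-- Regularity of the rows of `Z ⊆ X × X`, satisfied by a sparse random set: rows have at most `D`
elements, distinct rows share at most `K`, and for every `s`-subset of `V` the row counts not
exceeding `a` have small second moment. -/
structure RowRegular (Z : Finset (X × X)) (π : V → X) (D K s : ℕ) (a ε : ℝ) : Prop where
  card_row_le : ∀ x, #{y | (x, y) ∈ Z} ≤ D
  card_row_inter_le : ∀ x x', x ≠ x' → #{y | (x, y) ∈ Z ∧ (x', y) ∈ Z} ≤ K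
  sum_truncSq_le : ∀ S : Finset V, #S = s → ∑ x, truncSq a (rowCount Z π S x) ≤ ε * s ^ 2

namespace RowRegular

variable {Z : Finset (X × X)} {π : V → X} {b D K s : ℕ} {a ε : ℝ} {S : Finset V}

theorem rowCount_le (hZ : RowRegular Z π D K s a ε) (hb : ∀ y, #{v | π v = y} ≤ b) (x : X) :
    rowCount Z π S x ≤ b * D := by
  have hrow := card_filter_map_mem_le hb S {y | (x, y) ∈ Z}
  simp only [mem_filter, mem_univ, true_and] at hrow
  exact hrow.trans (Nat.mul_le_mul_left b (hZ.card_row_le x))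

theorem sum_rowCount_le (hZ : RowRegular Z π D K s a ε) (hb : ∀ y, #{v | π v = y} ≤ b)
    (ha : 0 ≤ a) (hK : (s : ℝ) * (b * K) ≤ a ^ 2 / 2) (hS : #S = s) :
    ∑ x with a < rowCount Z π S x, (rowCount Z π S x : ℝ) ≤ 2 * s := by
  subst hS
  have hlarge : ∀ x ∈ ({x | a < rowCount Z π S x} : Finset X), a ≤ rowCount Z π S x :=
    fun x hx => (mem_filter.1 hx).2.le
  refine sum_card_filter_le_two_mul (fun x u => (x, π u) ∈ Z) {x | a < rowCount Z π S x} S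
    (k := b * K) ha hlarge (fun x x' hx => ?_) (by exact_mod_cast hK)
  have hinter := card_filter_map_mem_le hb S {y | (x, y) ∈ Z ∧ (x', y) ∈ Z}
  simp only [mem_filter, mem_univ, true_and] at hinter
  exact hinter.trans (Nat.mul_le_mul_left b (hZ.card_row_inter_le x x' hx))

theorem sum_sq_rowCount_le (hZ : RowRegular Z π D K s a ε) (hb : ∀ y, #{v | π v = y} ≤ b)
    (ha : 0 ≤ a) (hK : (s : ℝ) * (b * K) ≤ a ^ 2 / 2) (hS : #S = s) :
    ∑ x, (rowCount Z π S x : ℝ) ^ 2 ≤ 2 * s * (b * D) + ε * s ^ 2 := by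
  have hlarge : ∑ x with a < rowCount Z π S x, (rowCount Z π S x : ℝ) ^ 2 ≤ b * D * (2 * s) := by
    calc ∑ x with a < rowCount Z π S x, (rowCount Z π S x : ℝ) ^ 2
        ≤ ∑ x with a < rowCount Z π S x, b * D * (rowCount Z π S x : ℝ) := by
          refine sum_le_sum fun x _ => ?_
          rw [sq]
          gcongr
          exact_mod_cast hZ.rowCount_le hb x
      _ ≤ b * D * (2 * s) := by
          rw [← mul_sum]
          exact mul_le_mul_of_nonneg_left (hZ.sum_rowCount_le hb ha hK hS) (by positivity)
  have hsplit : ∑ x, (rowCount Z π S x : ℝ) ^ 2 =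
      ∑ x with a < rowCount Z π S x, (rowCount Z π S x : ℝ) ^ 2 +
        ∑ x, truncSq a (rowCount Z π S x) := by
    rw [sum_filter, ← sum_add_distrib]
    refine sum_congr rfl fun x _ => ?_
    rw [truncSq]
    split_ifs with h₁ h₂ <;> grind
  linarith [hZ.sum_truncSq_le S hS]

end RowRegular

end RowRegularity

section SpreadGraphs

open Finset
open scoped Classical

/-- The graph on `X` whose edges are the members of `Z` above the diagonal. -/
def upperGraph {X : Type*} [LinearOrder X] (Z : Finset (X × X)) : SimpleGraph X where
  Adj x y := (x < y ∧ (x, y) ∈ Z) ∨ (y < x ∧ (y, x) ∈ Z)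
  symm := ⟨fun _ _ => Or.symm⟩
  loopless := ⟨fun _ h => (h.elim And.left And.left).false⟩

theorem upperGraph_mono {X : Type*} [LinearOrder X] {Z Z' : Finset (X × X)} (h : Z ⊆ Z') :
    upperGraph Z ≤ upperGraph Z' :=
  fun _ _ hadj => hadj.imp (fun hxy => ⟨hxy.1, h hxy.2⟩) (fun hyx => ⟨hyx.1, h hyx.2⟩)

variable {X V : Type*}

/-- Along `π : V → X` every `s`-set sees the graph `G` sparsely: each vertex of `G` has few
neighbours in it, and few of its pairs have a common neighbour. -/
structure IsSpread [Fintype X] (G : SimpleGraph X) (π : V → X) (s : ℕ) : Prop where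
  card_adj_le : ∀ S : Finset V, #S = s → ∀ x, 64 * #{u ∈ S | G.Adj x (π u)} ≤ s
  sum_sq_card_adj_le : ∀ S : Finset V, #S = s → 16 * ∑ x, #{u ∈ S | G.Adj x (π u)} ^ 2 ≤ 3 * s ^ 2

theorem card_upperGraph_adj_le [LinearOrder X] (Z : Finset (X × X)) (π : V → X) (S : Finset V)
    (x : X) : #{u ∈ S | (upperGraph Z).Adj x (π u)} ≤
      rowCount Z π S x + rowCount (Z.map (Equiv.prodComm X X)) π S x := by
  refine (card_le_card fun u hu => ?_).trans (card_union_le _ _)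
  rw [mem_filter] at hu
  rw [mem_union, mem_filter, mem_filter, mem_map_equiv]
  exact hu.2.imp (fun h => ⟨hu.1, h.2⟩) (fun h => ⟨hu.1, h.2⟩)

theorem isSpread_upperGraph [Fintype X] [LinearOrder X] [Fintype V] {Z : Finset (X × X)} {π : V → X}
    {b D K s : ℕ} {a : ℝ} (hb : ∀ y, #{v | π v = y} ≤ b) (hZ : RowRegular Z π D K s a (1 / 32))
    (hZ' : RowRegular (Z.map (Equiv.prodComm X X)) π D K s a (1 / 32)) (ha : 0 ≤ a)
    (hK : (s : ℝ) * (b * K) ≤ a ^ 2 / 2) (hD : 128 * (b * D) ≤ s) :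
    IsSpread (upperGraph Z) π s where
  card_adj_le S _ x := by
    linarith [card_upperGraph_adj_le Z π S x, hZ.rowCount_le (S := S) hb x,
      hZ'.rowCount_le (S := S) hb x]
  sum_sq_card_adj_le S hS := by
    have hD' : (128 : ℝ) * (b * D) ≤ s := mod_cast hD
    have hdeg (x : X) : (#{u ∈ S | (upperGraph Z).Adj x (π u)} : ℝ) ^ 2 ≤
        2 * ((rowCount Z π S x : ℝ) ^ 2 +
          (rowCount (Z.map (Equiv.prodComm X X)) π S x : ℝ) ^ 2) :=
      (pow_le_pow_left₀ (by positivity) (mod_cast card_upperGraph_adj_le Z π S x) 2).trans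
        add_sq_le
    have hsum : ∑ x, (#{u ∈ S | (upperGraph Z).Adj x (π u)} : ℝ) ^ 2 ≤
        2 * (2 * (2 * s * (b * D) + 1 / 32 * s ^ 2)) := by
      refine (sum_le_sum fun x _ => hdeg x).trans ?_
      rw [← mul_sum, sum_add_distrib]
      linarith [hZ.sum_sq_rowCount_le hb ha hK hS, hZ'.sum_sq_rowCount_le hb ha hK hS]
    have hfinal : 16 * ∑ x, (#{u ∈ S | (upperGraph Z).Adj x (π u)} : ℝ) ^ 2 ≤ 3 * s ^ 2 := by
      linarith [mul_le_mul_of_nonneg_left hD' (Nat.cast_nonneg (α := ℝ) s)]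
    exact_mod_cast hfinal

theorem card_filter_product (S : Finset V) (r : V → V → Prop) [DecidableRel r] :
    #{e ∈ S ×ˢ S | r e.1 e.2} = ∑ u ∈ S, #{v ∈ S | r u v} := by
  simp only [card_filter, sum_product]

theorem card_proj_eq_le [Fintype V] [DecidableEq X] {p : V → X} {b : ℕ}
    (hb : ∀ y, #{v | p v = y} ≤ b)
    (S : Finset V) : #{e ∈ S ×ˢ S | p e.1 = p e.2} ≤ #S * b := by
  rw [card_filter_product S fun u v => p u = p v]
  refine sum_le_card_nsmul _ _ _ fun u _ => (card_le_card fun v hv => ?_).trans (hb (p u))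
  exact mem_filter.2 ⟨mem_univ v, (mem_filter.1 hv).2.symm⟩

theorem IsSpread.card_adj_pairs_le [Fintype X] {G : SimpleGraph X} {p : V → X} {S : Finset V}
    {s : ℕ} (hG : IsSpread G p s) (hS : #S = s) :
    64 * #{e ∈ S ×ˢ S | G.Adj (p e.1) (p e.2)} ≤ s ^ 2 := by
  rw [card_filter_product S fun u v => G.Adj (p u) (p v), mul_sum]
  calc ∑ u ∈ S, 64 * #{v ∈ S | G.Adj (p u) (p v)} ≤ #S • s :=
        sum_le_card_nsmul _ _ _ fun u _ => hG.card_adj_le S hS (p u)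
    _ = s ^ 2 := by rw [hS, smul_eq_mul, sq]

theorem IsSpread.card_common_adj_pairs_le [Fintype X] {G : SimpleGraph X} {p : V → X} {S : Finset V}
    {s : ℕ} (hG : IsSpread G p s) (hS : #S = s) :
    16 * #{e ∈ S ×ˢ S | ∃ z, G.Adj z (p e.1) ∧ G.Adj z (p e.2)} ≤ 3 * s ^ 2 := by
  have hsub : {e ∈ S ×ˢ S | ∃ z, G.Adj z (p e.1) ∧ G.Adj z (p e.2)} ⊆
      univ.biUnion fun z => {u ∈ S | G.Adj z (p u)} ×ˢ {u ∈ S | G.Adj z (p u)} := by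
    intro e
    simp only [mem_filter, mem_product, mem_biUnion, mem_univ, true_and]
    grind
  have hcard := (card_le_card hsub).trans card_biUnion_le
  simp only [card_product, ← sq] at hcard
  exact (Nat.mul_le_mul_left 16 hcard).trans (hG.sum_sq_card_adj_le S hS)

end SpreadGraphs

section TrianglePruning

open Finset

variable {X : Type*} [LinearOrder X]

/-- The pairs of elements of `s`, each listed in increasing order. -/
def orderedPairs (s : Finset X) : Finset (X × X) := {p ∈ s ×ˢ s | p.1 < p.2}

theorem two_mul_card_orderedPairs (s : Finset X) : 2 * #(orderedPairs s) = #s * #s - #s := by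
  have hswap : #{p ∈ s.offDiag | ¬p.1 < p.2} = #(orderedPairs s) := by
    refine card_equiv (Equiv.prodComm X X) fun p => ?_
    simp only [orderedPairs, mem_filter, mem_offDiag, mem_product, not_lt, Equiv.prodComm_apply,
      Prod.fst_swap, Prod.snd_swap]
    grind
  have hlt : {p ∈ s.offDiag | p.1 < p.2} = orderedPairs s := by
    ext p
    simp only [orderedPairs, mem_filter, mem_offDiag, mem_product]
    grind
  rw [← offDiag_card, ← card_filter_add_card_filter_not (s := s.offDiag) fun p => p.1 < p.2, hswap,
    hlt, two_mul]

variable [Fintype X]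

variable (X) in
/-- The edge sets of the triangles with vertices in `X`. -/
noncomputable def triangles : Finset (Finset (X × X)) := (univ.powersetCard 3).image orderedPairs

theorem card_of_mem_triangles : ∀ T ∈ triangles X, #T = 3 := by
  intro T hT
  obtain ⟨s, hs, rfl⟩ := mem_image.1 hT
  have hcard := two_mul_card_orderedPairs s
  rw [(mem_powersetCard.1 hs).2] at hcard
  omega

theorem card_triangles_meeting_le (E : Finset (X × X)) :
    #{T ∈ triangles X | ¬Disjoint T E} ≤ #E * Fintype.card X := by
  have hsub : {T ∈ triangles X | ¬Disjoint T E} ⊆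
      (E ×ˢ univ).image fun ez : (X × X) × X => orderedPairs {ez.1.1, ez.1.2, ez.2} := by
    intro T hT
    obtain ⟨hT, hmeet⟩ := mem_filter.1 hT
    obtain ⟨s, hs, rfl⟩ := mem_image.1 hT
    obtain ⟨e, he, heE⟩ := not_disjoint_iff.1 hmeet
    simp only [orderedPairs, mem_filter, mem_product] at he
    have hthird : #({e.1, e.2} : Finset X) < #s := by
      rw [(mem_powersetCard.1 hs).2]
      exact card_le_two.trans_lt (by norm_num)
    obtain ⟨z, hzs, hz⟩ := exists_mem_notMem_of_card_lt_card hthird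
    have hs_eq : {e.1, e.2, z} = s := by
      refine eq_of_subset_of_card_le (by grind) ?_
      rw [(mem_powersetCard.1 hs).2, card_eq_three.2 ⟨e.1, e.2, z, by grind⟩]
    exact mem_image.2 ⟨(e, z), mem_product.2 ⟨heE, mem_univ z⟩, by rw [hs_eq]⟩
  calc #{T ∈ triangles X | ¬Disjoint T E} ≤ #(E ×ˢ (univ : Finset X)) :=
        (card_le_card hsub).trans card_image_le
    _ = #E * Fintype.card X := by rw [card_product, card_univ]

theorem cliqueFree_upperGraph_prune (Z : Finset (X × X)) :
    (upperGraph (prune (triangles X) Z)).CliqueFree 3 := by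
  intro s hs
  have hT : orderedPairs s ∈ triangles X :=
    mem_image_of_mem _ (mem_powersetCard.2 ⟨subset_univ s, hs.card_eq⟩)
  have hne : (orderedPairs s).Nonempty := by
    rw [← card_pos, card_of_mem_triangles _ hT]
    norm_num
  refine not_subset_prune (Z := Z) hT hne fun p hp => ?_
  obtain ⟨hp, hlt⟩ := mem_filter.1 hp
  rw [mem_product] at hp
  exact ((hs.isClique hp.1 hp.2 hlt.ne).resolve_right fun h => h.1.not_gt hlt).2

end TrianglePruning

section Gluing

open Finset
open scoped Classical

variable {X V : Type*} {π : Bool → V → X} {G H : Bool × Bool → SimpleGraph X} {i c : Bool} {u v : V}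

/-- A pair `u, v` that may carry an edge of colour `c` through the projection `π i`, given host
graphs `G (i, c)` for the two projections `i` and the two colours `c`. The condition on common
neighbours excludes triangles mixing the two projections, the last two conditions keep the two
colours disjoint. -/
structure Admissible (π : Bool → V → X) (G : Bool × Bool → SimpleGraph X) (i c : Bool) (u v : V) :
    Prop where
  proj_ne : π (!i) u ≠ π (!i) v
  not_common_adj : ∀ z, ¬((G (!i, c)).Adj z (π (!i) u) ∧ (G (!i, c)).Adj z (π (!i) v))
  not_adj_left : ¬(G (i, !c)).Adj (π i u) (π i v)
  not_adj_right : ¬(G (!i, !c)).Adj (π (!i) u) (π (!i) v)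

theorem Admissible.symm (h : Admissible π G i c u v) : Admissible π G i c v u where
  proj_ne := h.proj_ne.symm
  not_common_adj z hz := h.not_common_adj z hz.symm
  not_adj_left hadj := h.not_adj_left hadj.symm
  not_adj_right hadj := h.not_adj_right hadj.symm

theorem admissible_congr {G' : Bool × Bool → SimpleGraph X} (h : ∀ z ≠ (i, c), G z = G' z) :
    Admissible π G i c = Admissible π G' i c := by
  ext u v
  have hcommon := h (!i, c) (by simp)
  have hleft := h (i, !c) (by simp)
  have hright := h (!i, !c) (by simp)
  constructor <;> rintro ⟨h₁, h₂, h₃, h₄⟩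
  · exact ⟨h₁, hcommon ▸ h₂, hleft ▸ h₃, hright ▸ h₄⟩
  · exact ⟨h₁, hcommon ▸ h₂, hleft ▸ h₃, hright ▸ h₄⟩

/-- The graph of colour `c` on `V`: admissible pairs whose projection under some `π i` is an edge of
`H (i, c)`, a subgraph of the host graph `G (i, c)`. -/
def gluedGraph (π : Bool → V → X) (G H : Bool × Bool → SimpleGraph X) (c : Bool) :
    SimpleGraph V where
  Adj u v := ∃ i, Admissible π G i c u v ∧ (H (i, c)).Adj (π i u) (π i v)
  symm := ⟨fun _ _ ⟨i, hadm, hadj⟩ => ⟨i, hadm.symm, hadj.symm⟩⟩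
  loopless := ⟨fun _ ⟨_, hadm, _⟩ => hadm.proj_ne rfl⟩

theorem not_admissible_of_adj_adj {w : V} (hH : H (i, c) ≤ G (i, c))
    (hv : (H (i, c)).Adj (π i u) (π i v)) (hw : (H (i, c)).Adj (π i u) (π i w)) :
    ¬Admissible π G (!i) c v w := fun hadm =>
  hadm.not_common_adj (π i u) (by simpa using ⟨hH hv, hH hw⟩)

theorem gluedGraph_cliqueFree (hH : H ≤ G) (hfree : ∀ ic, (H ic).CliqueFree 3) (c : Bool) :
    (gluedGraph π G H c).CliqueFree 3 := by
  intro s hs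
  obtain ⟨u, v, w, ⟨i, huv, huv'⟩, ⟨j, huw, huw'⟩, ⟨k, hvw, hvw'⟩, rfl⟩ :=
    SimpleGraph.is3Clique_iff.1 hs
  have hmixed {i : Bool} {u v w : V} (hv : (H (i, c)).Adj (π i u) (π i v))
      (hw : (H (i, c)).Adj (π i u) (π i w)) : ¬Admissible π G (!i) c v w :=
    not_admissible_of_adj_adj (hH (i, c)) hv hw
  obtain rfl | rfl := Bool.eq_or_eq_not j i
  · obtain rfl | rfl := Bool.eq_or_eq_not k j
    · exact hfree (k, c) _ (SimpleGraph.is3Clique_triple_iff.2 ⟨huv', huw', hvw'⟩)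
    · exact hmixed huv' huw' hvw
  · obtain rfl | rfl := Bool.eq_or_eq_not k i
    · exact hmixed huv'.symm hvw' huw
    · exact hmixed huw'.symm hvw'.symm (by simpa using huv)

theorem disjoint_gluedGraph (hH : H ≤ G) (c : Bool) :
    Disjoint (gluedGraph π G H c) (gluedGraph π G H (!c)) := by
  rw [SimpleGraph.disjoint_left]
  rintro u v ⟨i, hadm, hadj⟩ ⟨j, hadm', -⟩
  have hhost := hH (i, c) hadj
  obtain rfl | rfl := Bool.eq_or_eq_not j i
  · exact hadm'.not_adj_left (by simpa using hhost)
  · exact hadm'.not_adj_right (by simpa using hhost)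

end Gluing

section CandidateEdges

open Finset
open scoped Classical

variable {X V : Type*} [LinearOrder X]

/-- The projections of the pairs in `S` related by `A`, in increasing order. -/
noncomputable def candidateEdges (p : V → X) (A : V → V → Prop) (S : Finset V) : Finset (X × X) :=
  {e ∈ S ×ˢ S | A e.1 e.2 ∧ p e.1 < p e.2}.image (Prod.map p p)

theorem card_candidateEdges_le (p : V → X) (A : V → V → Prop) (S : Finset V) :
    #(candidateEdges p A S) ≤ #S ^ 2 := by
  rw [sq, ← card_product]
  exact card_image_le.trans (card_filter_le _ _)

theorem card_filter_le_two_mul_card_candidateEdges {p : V → X} {A : V → V → Prop} {S : Finset V}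
    (hsymm : ∀ u v, A u v → A v u) (hirr : ∀ u, ¬A u u) (hinj : Set.InjOn p S) :
    #{e ∈ S ×ˢ S | A e.1 e.2} ≤ 2 * #(candidateEdges p A S) := by
  have hcard : #(candidateEdges p A S) = #{e ∈ S ×ˢ S | A e.1 e.2 ∧ p e.1 < p e.2} := by
    refine card_image_of_injOn fun e he e' he' heq => ?_
    have hmem := mem_product.1 (mem_filter.1 he).1
    have hmem' := mem_product.1 (mem_filter.1 he').1
    exact Prod.ext (hinj hmem.1 hmem'.1 (congrArg Prod.fst heq))
      (hinj hmem.2 hmem'.2 (congrArg Prod.snd heq))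
  rw [hcard, two_mul]
  set U := {e ∈ S ×ˢ S | A e.1 e.2 ∧ p e.1 < p e.2}
  have hsub : {e ∈ S ×ˢ S | A e.1 e.2} ⊆ U ∪ U.image Prod.swap := by
    rintro ⟨u, v⟩ he
    simp only [mem_filter, mem_product] at he
    obtain ⟨⟨hu, hv⟩, hA⟩ := he
    rcases lt_trichotomy (p u) (p v) with hlt | heq | hgt
    · exact mem_union_left _ (mem_filter.2 ⟨mem_product.2 ⟨hu, hv⟩, hA, hlt⟩)
    · exact absurd (hinj hu hv heq ▸ hA) (hirr u)
    · exact mem_union_right _ (mem_image.2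
        ⟨(v, u), mem_filter.2 ⟨mem_product.2 ⟨hv, hu⟩, hsymm u v hA, hgt⟩, rfl⟩)
  exact (card_le_card hsub).trans ((card_union_le _ _).trans (Nat.add_le_add_left card_image_le _))

variable {π : Bool → V → X} {G H : Bool × Bool → SimpleGraph X} {i c : Bool} {S : Finset V} {s : ℕ}

theorem exists_gluedGraph_adj {P : Finset (X × X)} (hP : H (i, c) = upperGraph P)
    (hmeet : ¬Disjoint (candidateEdges (π i) (Admissible π G i c) S) P) :
    ∃ u ∈ S, ∃ v ∈ S, (gluedGraph π G H c).Adj u v := by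
  obtain ⟨e, he, heP⟩ := not_disjoint_iff.1 hmeet
  obtain ⟨⟨u, v⟩, huv, rfl⟩ := mem_image.1 he
  obtain ⟨huv, hadm, hlt⟩ := mem_filter.1 huv
  exact ⟨u, (mem_product.1 huv).1, v, (mem_product.1 huv).2, i, hadm, hP ▸ .inl ⟨hlt, heP⟩⟩

theorem sq_le_four_mul_card_candidateEdges [Fintype X] [Fintype V] {b : ℕ}
    (hb : ∀ y, #{v | π (!i) v = y} ≤ b) (hbs : 64 * b ≤ s)
    (hG : ∀ z ≠ (i, c), IsSpread (G z) (π z.1) s) (hS : #S = s) (hinj : Set.InjOn (π i) S) :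
    s ^ 2 ≤ 4 * #(candidateEdges (π i) (Admissible π G i c) S) := by
  have hadm := card_filter_le_two_mul_card_candidateEdges (A := Admissible π G i c)
    (fun _ _ => Admissible.symm) (fun _ h => h.proj_ne rfl) hinj
  have hcover : S ×ˢ S ⊆ {e ∈ S ×ˢ S | Admissible π G i c e.1 e.2} ∪
      ({e ∈ S ×ˢ S | π (!i) e.1 = π (!i) e.2} ∪
      ({e ∈ S ×ˢ S | ∃ z, (G (!i, c)).Adj z (π (!i) e.1) ∧ (G (!i, c)).Adj z (π (!i) e.2)} ∪
      ({e ∈ S ×ˢ S | (G (i, !c)).Adj (π i e.1) (π i e.2)} ∪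
        {e ∈ S ×ˢ S | (G (!i, !c)).Adj (π (!i) e.1) (π (!i) e.2)}))) := by
    intro e he
    simp only [mem_union, mem_filter, he, true_and]
    by_contra! hnot
    obtain ⟨hadm, hne, hcommon, hleft, hright⟩ := hnot
    exact hadm ⟨hne, fun z hz => hcommon z hz.1 hz.2, hleft, hright⟩
  have hcard := card_le_card hcover
  grw [card_union_le, card_union_le, card_union_le, card_union_le, card_product, hS] at hcard
  have hfibre := card_proj_eq_le hb S
  have hcommon := (hG (!i, c) (by simp)).card_common_adj_pairs_le hS
  have hleft := (hG (i, !c) (by simp)).card_adj_pairs_le hS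
  have hright := (hG (!i, !c) (by simp)).card_adj_pairs_le hS
  rw [hS] at hfibre
  nlinarith [Nat.mul_le_mul_left s hbs]

end CandidateEdges

section RandomRows

open Finset

variable {X V : Type*} [Fintype X] [DecidableEq X] {q : ℕ} [NeZero q]

theorem uniformProb_le_card_row_le (x : X) (D : ℕ) :
    uniformProb (fun f : X × X → Fin q => D ≤ #{y | (x, y) ∈ zeros f}) ≤
      (Fintype.card X).choose D * (1 / q : ℝ) ^ D := by
  have hcard : ∀ T ∈ (powersetCard D univ).image fun T : Finset X => ({x} : Finset X) ×ˢ T,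
      #T = D := by
    simp only [mem_image, mem_powersetCard]
    rintro _ ⟨T, ⟨-, rfl⟩, rfl⟩
    simp
  refine (uniformProb_mono fun f hf => ?_).trans
    ((uniformProb_exists_subset_zeros_le hcard).trans ?_)
  · obtain ⟨T, hT, hTcard⟩ := exists_subset_card_eq hf
    refine ⟨{x} ×ˢ T, mem_image_of_mem _ (mem_powersetCard.2 ⟨subset_univ T, hTcard⟩), ?_⟩
    rintro ⟨x', y⟩ hmem
    obtain ⟨hy, rfl⟩ : y ∈ T ∧ x = x' := by simpa using hmem
    exact (mem_filter.1 (hT hy)).2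
  · gcongr
    exact card_image_le.trans (card_powersetCard D univ).le

theorem uniformProb_le_card_row_inter_le {x x' : X} (hx : x ≠ x') (K : ℕ) :
    uniformProb (fun f : X × X → Fin q => K ≤ #{y | (x, y) ∈ zeros f ∧ (x', y) ∈ zeros f}) ≤
      (Fintype.card X).choose K * (1 / q : ℝ) ^ (2 * K) := by
  have hcard : ∀ T ∈ (powersetCard K univ).image fun T : Finset X => ({x, x'} : Finset X) ×ˢ T,
      #T = 2 * K := by
    simp only [mem_image, mem_powersetCard]
    rintro _ ⟨T, ⟨-, rfl⟩, rfl⟩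
    rw [card_product, card_pair hx]
  refine (uniformProb_mono fun f hf => ?_).trans
    ((uniformProb_exists_subset_zeros_le hcard).trans ?_)
  · obtain ⟨T, hT, hTcard⟩ := exists_subset_card_eq hf
    refine ⟨{x, x'} ×ˢ T, mem_image_of_mem _ (mem_powersetCard.2 ⟨subset_univ T, hTcard⟩), ?_⟩
    rintro ⟨z, y⟩ hmem
    obtain ⟨rfl | rfl, hy⟩ : (z = x ∨ z = x') ∧ y ∈ T := by simpa using hmem
    · exact (mem_filter.1 (hT hy)).2.1
    · exact (mem_filter.1 (hT hy)).2.2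
  · gcongr
    exact card_image_le.trans (card_powersetCard K univ).le

theorem rowCount_zeros (f : X × X → Fin q) (π : V → X) (S : Finset V) (x : X) :
    (rowCount (zeros f) π S x : ℝ) =
      ∑ y ∈ zeros (Function.curry f x), (#{u ∈ S | π u = y} : ℝ) := by
  rw [← Nat.cast_sum, sum_card_fiberwise_eq_card_filter]
  simp only [rowCount, mem_zeros, Function.curry]

variable [Fintype V] {π : V → X} {b : ℕ}

theorem uniformProb_le_sum_truncSq_rowCount_le (hb : ∀ y, #{v | π v = y} ≤ b) (S : Finset V)
    {l a c : ℝ} (hl : 0 < l) (ha : 0 < a) (hlb : 2 * (l * a) * b ≤ 1)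
    (hq : 2 * (2 * (l * a)) * (#S / q : ℝ) ≤ 1)
    (hc : Fintype.card X * (8 * (b * (#S / q : ℝ) + 4 * (#S / q : ℝ) ^ 2)) ≤ c / 2) :
    uniformProb (fun f : X × X → Fin q => c ≤ ∑ x, truncSq a (rowCount (zeros f) π S x)) ≤
      Real.exp (-(l * c / 2)) := by
  have hsum : ∑ y, (#{u ∈ S | π u = y} : ℝ) = #S := by
    rw [← Nat.cast_sum, sum_card_fiberwise_eq_card_filter]
    simp
  have hfibre (y : X) : (#{u ∈ S | π u = y} : ℝ) ≤ b :=
    mod_cast (card_le_card (filter_subset_filter _ (subset_univ S))).trans (hb y)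
  simp only [rowCount_zeros]
  exact (uniformProb_comp_equiv (Equiv.curry X X (Fin q)) fun f => c ≤ ∑ x,
    truncSq a (∑ y ∈ zeros (f x), (#{u ∈ S | π u = y} : ℝ))).trans_le
      (uniformProb_le_sum_truncSq_le (fun _ => by positivity) hfibre hl ha hlb (by rwa [hsum])
        (by rwa [hsum]))

theorem uniformProb_not_rowRegular_le (π : V → X) {D K s : ℕ} {a ε p : ℝ}
    (hp : ∀ S : Finset V, #S = s → uniformProb (fun f : X × X → Fin q =>
      ε * s ^ 2 ≤ ∑ x, truncSq a (rowCount (zeros f) π S x)) ≤ p) :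
    uniformProb (fun f : X × X → Fin q => ¬RowRegular (zeros f) π D K s a ε) ≤
      Fintype.card X * ((Fintype.card X).choose D * (1 / q : ℝ) ^ D) +
        (Fintype.card X ^ 2 * ((Fintype.card X).choose K * (1 / q : ℝ) ^ (2 * K)) +
          #(powersetCard s (univ : Finset V)) * p) := by
  have hsplit : ∀ f : X × X → Fin q, ¬RowRegular (zeros f) π D K s a ε →
      (∃ x ∈ univ, D ≤ #{y | (x, y) ∈ zeros f}) ∨
      (∃ e ∈ (univ : Finset X).offDiag,
        K ≤ #{y | (e.1, y) ∈ zeros f ∧ (e.2, y) ∈ zeros f}) ∨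
      ∃ S ∈ powersetCard s (univ : Finset V),
        ε * s ^ 2 ≤ ∑ x, truncSq a (rowCount (zeros f) π S x) := by
    intro f hf
    contrapose! hf
    obtain ⟨hrow, hinter, hsq⟩ := hf
    exact ⟨fun x => (hrow x (mem_univ x)).le, fun x x' hx => (hinter (x, x') (by simpa)).le,
      fun S hS => (hsq S (mem_powersetCard.2 ⟨subset_univ S, hS⟩)).le⟩
  refine (uniformProb_mono hsplit).trans ((uniformProb_or_le _ _).trans
    (add_le_add ?_ ((uniformProb_or_le _ _).trans (add_le_add ?_ ?_))))
  · exact uniformProb_exists_mem_le univ _ fun x _ => uniformProb_le_card_row_le x D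
  · refine (uniformProb_exists_mem_le (univ : Finset X).offDiag _ fun e he =>
      uniformProb_le_card_row_inter_le (mem_offDiag.1 he).2.2 K).trans ?_
    gcongr
    rw [offDiag_card, card_univ, ← sq]
    exact_mod_cast Nat.sub_le _ _
  · exact uniformProb_exists_mem_le _ _ fun S hS => hp S (mem_powersetCard.1 hS).2

end RandomRows

section RandomMaps

open Finset

theorem pow_nine_mul_half_pow_le {r : ℕ} (hr : 0 < r) :
    (r : ℝ) ^ 9 * (1 / 2) ^ (10 * r) ≤ 1 / r := by
  have hr' : (0 : ℝ) < r := mod_cast hr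
  have htwo : (r : ℝ) ^ 10 ≤ 2 ^ (10 * r) := by
    rw [mul_comm, pow_mul]
    gcongr
    exact_mod_cast (Nat.lt_two_pow_self (n := r)).le
  rw [one_div_pow, ← div_eq_mul_one_div, div_le_div_iff₀ (by positivity) hr']
  linarith [pow_succ (r : ℝ) 9]

variable {X V : Type*} [Fintype X] [DecidableEq X] [Fintype V] {r s : ℕ}

theorem uniformProb_exists_le_card_fibre_le [Nonempty X] (hr : 0 < r)
    (hV : Fintype.card V = Fintype.card X * r) :
    uniformProb (fun g : V → X => ∃ y ∈ univ, 10 * r ≤ #{v | g v = y}) ≤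
      Fintype.card X * (1 / 2) ^ (10 * r) := by
  have hX : (0 : ℝ) < Fintype.card X := mod_cast Fintype.card_pos
  refine uniformProb_exists_mem_le univ _ fun y _ => ?_
  have hfibre := uniformProb_le_card_filter_le {y} (univ : Finset V) (10 * r)
  simp only [mem_singleton, card_univ, card_singleton, Nat.cast_one] at hfibre
  refine hfibre.trans (choose_mul_pow_le_pow (by omega) (by positivity) ?_)
  rw [hV]
  push_cast
  field_simp
  norm_num

theorem uniformProb_exists_le_card_filter_mem_le {p : V → X} (hX : Fintype.card X = r ^ 9)
    (hp : ∀ y, #{v | p v = y} ≤ r) (hr : 0 < r) (hs : 0 < s) (hsr : s ≤ r ^ 6) :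
    uniformProb (fun g : V → X => ∃ AB ∈ powersetCard s univ ×ˢ powersetCard s univ,
      10 * s ≤ #{v ∈ {v | p v ∈ AB.1} | g v ∈ AB.2}) ≤ (1 / r ^ 2) ^ s := by
  have hr' : (0 : ℝ) < r := mod_cast hr
  have hsr' : (s : ℝ) ≤ r ^ 6 := mod_cast hsr
  have : Nonempty X := Fintype.card_pos_iff.1 (hX ▸ pow_pos hr 9)
  refine (uniformProb_exists_mem_le (c := (1 / r ^ 2 : ℝ) ^ (10 * s)) _ _ ?_).trans ?_
  · rintro ⟨A, B⟩ hAB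
    obtain ⟨hA, hB⟩ := mem_product.1 hAB
    have hcard := card_filter_map_mem_le hp univ A
    rw [(mem_powersetCard.1 hA).2] at hcard
    refine (uniformProb_le_card_filter_le _ _ _).trans
      (choose_mul_pow_le_pow (by omega) (by positivity) ?_)
    rw [hX, (mem_powersetCard.1 hB).2]
    push_cast
    calc 3 * (#{v | p v ∈ A} : ℝ) * (s / r ^ 9) ≤ 3 * (r * s : ℕ) * (s / r ^ 9 : ℝ) := by gcongr
      _ = 3 * s * (s / r ^ 8 : ℝ) := by
          push_cast
          field_simp
      _ ≤ 3 * s * (r ^ 6 / r ^ 8 : ℝ) := by gcongr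
      _ ≤ 10 * s * (r ^ 6 / r ^ 8 : ℝ) := by
          gcongr
          norm_num
      _ = 1 / (r : ℝ) ^ 2 * (10 * s) := by field_simp
  · rw [card_product, card_powersetCard, card_univ, hX]
    push_cast
    calc ((r ^ 9).choose s * (r ^ 9).choose s * (1 / r ^ 2) ^ (10 * s) : ℝ)
        ≤ (r ^ 9) ^ s * (r ^ 9) ^ s * (1 / r ^ 2 : ℝ) ^ (10 * s) := by
          gcongr <;> exact_mod_cast Nat.choose_le_pow _ _
      _ = (1 / r ^ 2) ^ s := by
          rw [pow_mul, ← mul_pow, ← mul_pow]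
          congr 1
          field_simp

theorem exists_map_forall_le_card_image {p : V → X} (hX : Fintype.card X = r ^ 9)
    (hV : Fintype.card V = r ^ 10) (hp : ∀ y, #{v | p v = y} ≤ r) (hr : 3 ≤ r) (hs : 0 < s)
    (hsr : s ≤ r ^ 6) :
    ∃ g : V → X, (∀ y, #{v | g v = y} ≤ 10 * r) ∧
      ∀ S : Finset V, #S = 10 * s → s ≤ #(S.image p) ∨ s ≤ #(S.image g) := by
  have hr' : (3 : ℝ) ≤ r := mod_cast hr
  have hsX : s ≤ Fintype.card X := hX ▸ hsr.trans (Nat.pow_le_pow_right (by omega) (by norm_num))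
  have : Nonempty X := Fintype.card_pos_iff.1 (hs.trans_le hsX)
  have hfibre := uniformProb_exists_le_card_fibre_le (X := X) (V := V) (r := r) (by omega)
    (by rw [hX, hV, pow_succ])
  have hfibre' : (Fintype.card X : ℝ) * (1 / 2) ^ (10 * r) ≤ 1 / 3 := by
    rw [hX, Nat.cast_pow]
    exact (pow_nine_mul_half_pow_le (by omega)).trans
      (one_div_le_one_div_of_le (by norm_num) hr')
  have himage := uniformProb_exists_le_card_filter_mem_le hX hp (by omega) hs hsr
  have hsq : (1 / r ^ 2 : ℝ) ≤ 1 / 3 := one_div_le_one_div_of_le (by norm_num) (by nlinarith)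
  have himage' : (1 / r ^ 2 : ℝ) ^ s ≤ 1 / 3 :=
    (pow_le_of_le_one (by positivity) (hsq.trans (by norm_num)) hs.ne').trans hsq
  obtain ⟨g, hg⟩ := exists_not_of_uniformProb_lt_one
    ((uniformProb_or_le _ _).trans_lt (by linarith [hfibre.trans hfibre', himage.trans himage']) :
      uniformProb (fun g : V → X => (∃ y ∈ univ, 10 * r ≤ #{v | g v = y}) ∨
        ∃ AB ∈ powersetCard s univ ×ˢ powersetCard s univ,
          10 * s ≤ #{v ∈ {v | p v ∈ AB.1} | g v ∈ AB.2}) < 1)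
  push Not at hg
  refine ⟨g, fun y => (hg.1 y (mem_univ y)).le, fun S hS => ?_⟩
  by_contra! hsmall
  obtain ⟨A, hSA, -, hA⟩ := exists_subsuperset_card_eq (subset_univ (S.image p)) hsmall.1.le
    (by simpa using hsX)
  obtain ⟨B, hSB, -, hB⟩ := exists_subsuperset_card_eq (subset_univ (S.image g)) hsmall.2.le
    (by simpa using hsX)
  refine (hg.2 (A, B) (mem_product.2 ⟨mem_powersetCard.2 ⟨subset_univ A, hA⟩,
    mem_powersetCard.2 ⟨subset_univ B, hB⟩⟩)).not_ge (hS ▸ card_le_card fun v hv => ?_)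
  simp only [mem_filter, mem_univ, true_and]
  exact ⟨hSA (mem_image_of_mem p hv), hSB (mem_image_of_mem g hv)⟩

theorem exists_injOn_subset_of_le_card_image {V X : Type*} [DecidableEq X] {p : V → X}
    {S : Finset V} {s : ℕ} (h : s ≤ #(S.image p)) : ∃ T ⊆ S, #T = s ∧ Set.InjOn p T := by
  obtain ⟨T, hTS, hinj, himage⟩ := Finset.exists_subset_injOn_image_eq_of_surjOn (f := p)
    (S : Set V) (S.image p) fun y hy => by simpa using hy
  obtain ⟨T', hT', hcard⟩ := exists_subset_card_eq
    (h.trans_eq (himage ▸ card_image_of_injOn hinj))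
  exact ⟨T', hT'.trans (mod_cast hTS), hcard, hinj.mono hT'⟩

end RandomMaps

section Parameters

/-- The parameters of the construction on `r ^ 10` vertices; `L` stands for `√(log r)`, up to
rounding. -/
structure Scale where
  r : ℕ
  L : ℕ
  one_le_L : 1 ≤ L
  log_r_le : Real.log r ≤ L ^ 2
  pow_L_le_r : 10 ^ 9 * L ^ 4 ≤ r

namespace Scale

variable (P : Scale)

/-- The inverse of the density of the random sets. -/
def q : ℕ := P.r ^ 5 / P.L

/-- The size of the vertex sets that have to contain an edge, of order `√(n log n)` for
`n = r ^ 10`. -/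
def s : ℕ := 16384 * (P.r ^ 5 * P.L)

/-- The bound on the row sizes of the random sets. -/
def D : ℕ := 12 * (P.r ^ 4 * P.L)

/-- The threshold from which on a row count is large. -/
noncomputable def a : ℝ := P.s / (25600 * P.r * P.L ^ 2)

theorem one_le_cast_L : (1 : ℝ) ≤ P.L := mod_cast P.one_le_L

theorem pow_L_le_cast_r {i : ℕ} (hi : i ≤ 4) : (10 : ℝ) ^ 9 * P.L ^ i ≤ P.r := by
  calc (10 : ℝ) ^ 9 * P.L ^ i ≤ 10 ^ 9 * P.L ^ 4 := by
        gcongr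
        exact P.one_le_cast_L
    _ ≤ (P.r : ℝ) := mod_cast P.pow_L_le_r

theorem le_cast_r : (10 : ℝ) ^ 9 ≤ P.r := by simpa using P.pow_L_le_cast_r (Nat.zero_le 4)

theorem cast_L_pos : (0 : ℝ) < P.L := by linarith [P.one_le_cast_L]

theorem cast_r_pos : (0 : ℝ) < P.r := by linarith [P.le_cast_r]

theorem L_le_r_pow : P.L ≤ P.r ^ 5 := by
  have hr : 1 ≤ P.r := mod_cast P.cast_r_pos
  have hL : (P.L : ℝ) ≤ P.r := by
    linarith [P.pow_L_le_cast_r (i := 1) (by norm_num), pow_one (P.L : ℝ), P.cast_L_pos]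
  exact (mod_cast hL : P.L ≤ P.r).trans (Nat.le_self_pow (by norm_num) P.r)

theorem q_pos : 0 < P.q := Nat.div_pos P.L_le_r_pow P.one_le_L

instance : NeZero P.q := ⟨P.q_pos.ne'⟩

theorem cast_q_pos : (0 : ℝ) < P.q := mod_cast P.q_pos

theorem q_mul_L_le : (P.q * P.L : ℝ) ≤ P.r ^ 5 := mod_cast Nat.div_mul_le_self _ _

theorem le_two_mul_q_mul_L : (P.r : ℝ) ^ 5 ≤ 2 * (P.q * P.L) := by
  have hlt : P.r ^ 5 < P.L * (P.q + 1) := Nat.lt_mul_div_succ _ P.one_le_L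
  have hle : P.L ≤ P.q * P.L := Nat.le_mul_of_pos_left _ P.q_pos
  exact_mod_cast (show P.r ^ 5 ≤ 2 * (P.q * P.L) by linarith)

theorem cast_s : (P.s : ℝ) = 16384 * (P.r ^ 5 * P.L) := by simp [s]

theorem le_cast_s : (1000 : ℝ) ≤ P.s := by
  have hr : (1 : ℝ) ≤ P.r ^ 5 := one_le_pow₀ (by linarith [P.le_cast_r])
  rw [cast_s]
  linarith [one_le_mul_of_one_le_of_one_le hr P.one_le_cast_L]

theorem cast_s_pos : (0 : ℝ) < P.s := by linarith [P.le_cast_s]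

theorem a_pos : 0 < P.a :=
  div_pos P.cast_s_pos (mul_pos (mul_pos (by norm_num) P.cast_r_pos) (pow_pos P.cast_L_pos 2))

theorem r_pow_div_q_le : (P.r ^ 9 / P.q : ℝ) ≤ 2 * (P.r ^ 4 * P.L) := by
  rw [div_le_iff₀ P.cast_q_pos]
  calc (P.r : ℝ) ^ 9 = (P.r : ℝ) ^ 4 * P.r ^ 5 := by ring
    _ ≤ (P.r : ℝ) ^ 4 * (2 * (P.q * P.L)) := by gcongr; exact P.le_two_mul_q_mul_L
    _ = _ := by ring

theorem r_pow_div_q_sq_le : (P.r ^ 9 / P.q ^ 2 : ℝ) ≤ 4 * P.L ^ 2 / P.r := by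
  rw [div_le_div_iff₀ (pow_pos P.cast_q_pos 2) P.cast_r_pos]
  calc (P.r : ℝ) ^ 9 * P.r = ((P.r : ℝ) ^ 5) ^ 2 := by ring
    _ ≤ (2 * (P.q * P.L) : ℝ) ^ 2 := by gcongr; exact P.le_two_mul_q_mul_L
    _ = _ := by ring

theorem s_div_q_le : (P.s / P.q : ℝ) ≤ 32768 * P.L ^ 2 := by
  rw [div_le_iff₀ P.cast_q_pos, cast_s]
  calc (16384 * (P.r ^ 5 * P.L) : ℝ) ≤ (16384 * (2 * (P.q * P.L) * P.L) : ℝ) := by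
        gcongr; exact P.le_two_mul_q_mul_L
    _ = _ := by ring

theorem le_s_div_q : 16384 * P.L ^ 2 ≤ (P.s / P.q : ℝ) := by
  rw [le_div_iff₀ P.cast_q_pos, cast_s]
  calc (16384 * P.L ^ 2 * P.q : ℝ) = 16384 * (P.q * P.L * P.L : ℝ) := by ring
    _ ≤ _ := by gcongr; exact P.q_mul_L_le

theorem r_pow_le_q_mul_s : 8192 * (P.r : ℝ) ^ 10 ≤ P.q * P.s := by
  rw [cast_s]
  calc 8192 * (P.r : ℝ) ^ 10 = 8192 * ((P.r : ℝ) ^ 5 * P.r ^ 5) := by ring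
    _ ≤ 8192 * ((P.r : ℝ) ^ 5 * (2 * (P.q * P.L))) := by gcongr; exact P.le_two_mul_q_mul_L
    _ = _ := by ring

theorem s_mul_le_a_sq : (P.s : ℝ) * ((10 * P.r : ℕ) * (40 : ℕ)) ≤ P.a ^ 2 / 2 := by
  have hr := P.cast_r_pos
  have hL := P.cast_L_pos
  have hr_one : (1 : ℝ) ≤ P.r := by linarith [P.le_cast_r]
  have hs : 800 * 25600 ^ 2 * (P.r : ℝ) ^ 3 * P.L ^ 4 ≤ P.s := by
    calc 800 * 25600 ^ 2 * (P.r : ℝ) ^ 3 * P.L ^ 4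
        = (800 * 25600 ^ 2 / 10 ^ 9) * ((P.r : ℝ) ^ 3 * P.L * (10 ^ 9 * P.L ^ 3)) := by ring
      _ ≤ 16384 * ((P.r : ℝ) ^ 3 * P.L * P.r ^ 2) := by
          gcongr
          · norm_num
          · exact (P.pow_L_le_cast_r (by norm_num)).trans (le_self_pow₀ hr_one two_ne_zero)
      _ = P.s := by rw [cast_s]; ring
  rw [a, div_pow, div_div, le_div_iff₀ (by positivity)]
  push_cast
  calc (P.s : ℝ) * (10 * P.r * 40) * ((25600 * P.r * P.L ^ 2) ^ 2 * 2)
      = (P.s : ℝ) * (800 * 25600 ^ 2 * P.r ^ 3 * P.L ^ 4) := by ring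
    _ ≤ (P.s * P.s : ℝ) := by gcongr
    _ = (P.s : ℝ) ^ 2 := (sq _).symm

theorem mul_D_le_s : 128 * (10 * P.r * P.D) ≤ P.s := by
  rw [D, s]
  calc 128 * (10 * P.r * (12 * (P.r ^ 4 * P.L))) = 15360 * (P.r ^ 5 * P.L) := by ring
    _ ≤ 16384 * (P.r ^ 5 * P.L) := by gcongr; norm_num

theorem mul_r_le_s : 64 * (10 * P.r) ≤ P.s := by
  have hr : 1 ≤ P.r := mod_cast P.cast_r_pos
  calc 64 * (10 * P.r) ≤ 16384 * (P.r * 1) := by omega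
    _ ≤ 16384 * (P.r ^ 5 * P.L) := by
        gcongr
        · exact Nat.le_self_pow (by norm_num) _
        · exact P.one_le_L

theorem s_le_r_pow : P.s ≤ P.r ^ 6 := by
  have hL : (16384 * P.L : ℝ) ≤ P.r := by
    linarith [P.pow_L_le_cast_r (i := 1) (by norm_num), pow_one (P.L : ℝ), P.cast_L_pos]
  calc P.s = P.r ^ 5 * (16384 * P.L) := by rw [s]; ring
    _ ≤ P.r ^ 5 * P.r := Nat.mul_le_mul_left _ (mod_cast hL)
    _ = P.r ^ 6 := (pow_succ _ _).symm

open Finset in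
theorem card_powersetCard_mul_exp_le {V : Type*} [Fintype V] (hV : Fintype.card V = P.r ^ 10) :
    #(powersetCard P.s (univ : Finset V)) * Real.exp (-(20 * P.L ^ 2 * P.s)) ≤ 1 / 1000 := by
  have hlog : Real.log ((P.r : ℝ) ^ 10) ≤ 10 * P.L ^ 2 := by
    rw [Real.log_pow]
    exact mul_le_mul_of_nonneg_left P.log_r_le (by norm_num)
  have hexp : Real.exp (-1000) ≤ 1 / 1000 := by
    rw [Real.exp_neg, ← one_div]
    exact one_div_le_one_div_of_le (by norm_num) (by linarith [Real.add_one_le_exp (1000 : ℝ)])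
  calc #(powersetCard P.s (univ : Finset V)) * Real.exp (-(20 * P.L ^ 2 * P.s))
      ≤ ((P.r : ℝ) ^ 10) ^ P.s * Real.exp (-(20 * P.L ^ 2 * P.s)) := by
        gcongr
        rw [card_powersetCard, card_univ, hV]
        exact_mod_cast Nat.choose_le_pow _ _
    _ ≤ Real.exp (10 * P.L ^ 2) ^ P.s * Real.exp (-(20 * P.L ^ 2 * P.s)) := by
        gcongr
        exact (Real.log_le_iff_le_exp (pow_pos P.cast_r_pos 10)).1 hlog
    _ = Real.exp (-(10 * P.L ^ 2 * P.s)) := by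
        rw [← Real.exp_nat_mul, ← Real.exp_add]
        ring_nf
    _ ≤ Real.exp (-1000) := by
        gcongr
        nlinarith [P.le_cast_s, one_le_pow₀ (n := 2) P.one_le_cast_L]
    _ ≤ 1 / 1000 := hexp

end Scale

end Parameters

section RandomHosts

open Finset

namespace Scale

variable (P : Scale) {X V : Type*} [Fintype X] [Fintype V]

theorem uniformProb_sum_truncSq_rowCount_le [DecidableEq X] (hX : Fintype.card X = P.r ^ 9)
    {π : V → X} (hb : ∀ y, #{v | π v = y} ≤ 10 * P.r) {S : Finset V} (hS : #S = P.s) :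
    uniformProb (fun f : X × X → Fin P.q =>
      (1 / 32 : ℝ) * P.s ^ 2 ≤ ∑ x, truncSq P.a (rowCount (zeros f) π S x)) ≤
        Real.exp (-(20 * P.L ^ 2 * P.s)) := by
  have hr := P.cast_r_pos
  have hL := P.cast_L_pos
  have hq := P.cast_q_pos
  have hs := P.cast_s_pos
  have hla : 1280 * P.L ^ 2 / P.s * P.a = 1 / (20 * P.r : ℝ) := by
    rw [a]
    field_simp
    norm_num
  have hlinear : (P.r : ℝ) ^ 10 / (P.q * P.s) ≤ 1 / 8192 := by
    rw [div_le_div_iff₀ (by positivity) (by norm_num)]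
    linarith [P.r_pow_le_q_mul_s]
  have hquadratic : (P.r ^ 9 / P.q ^ 2 : ℝ) ≤ 1 / 10 ^ 7 := by
    refine P.r_pow_div_q_sq_le.trans ?_
    rw [div_le_div_iff₀ hr (by norm_num)]
    linarith [P.pow_L_le_cast_r (i := 2) (by norm_num), P.le_cast_r]
  refine (uniformProb_le_sum_truncSq_rowCount_le hb S (l := 1280 * P.L ^ 2 / P.s) (by positivity)
    P.a_pos ?_ ?_ ?_).trans_eq ?_
  · rw [hla]
    push_cast
    field_simp
    norm_num
  · rw [hla, hS, show 2 * (2 * (1 / (20 * P.r))) * (P.s / P.q) = (P.s / P.q) / (5 * P.r : ℝ) by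
      field_simp; norm_num, div_le_one (by positivity)]
    linarith [P.s_div_q_le, P.pow_L_le_cast_r (i := 2) (by norm_num)]
  · rw [hX, hS]
    push_cast
    calc (P.r : ℝ) ^ 9 * (8 * (10 * P.r * (P.s / P.q) + 4 * (P.s / P.q) ^ 2))
        = P.s ^ 2 * (80 * (P.r ^ 10 / (P.q * P.s)) + 32 * (P.r ^ 9 / P.q ^ 2)) := by
          field_simp
          ring
      _ ≤ (P.s : ℝ) ^ 2 * (1 / 64) := by
          gcongr
          linarith
      _ = 1 / 32 * (P.s : ℝ) ^ 2 / 2 := by ring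
  · congr 1
    field_simp
    norm_num

theorem mul_choose_D_mul_pow_le :
    ((P.r ^ 9 : ℕ) : ℝ) * ((P.r ^ 9).choose P.D * (1 / P.q : ℝ) ^ P.D) ≤ 1 / 1000 := by
  have hr := P.cast_r_pos
  have hr_one : 1 ≤ P.r := mod_cast hr
  have hmul : 1 ≤ P.r ^ 4 * P.L := Nat.mul_pos (pow_pos hr_one 4) P.one_le_L
  have hchoose : (P.r ^ 9).choose P.D * (1 / P.q : ℝ) ^ P.D ≤ (1 / 2 : ℝ) ^ P.D := by
    refine choose_mul_pow_le_pow (by rw [D]; omega) (by positivity) ?_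
    rw [D]
    push_cast
    rw [mul_one_div, mul_div_assoc]
    linarith [P.r_pow_div_q_le]
  have hD : 10 * P.r ≤ P.D := by
    rw [D]
    have hpow : P.r ≤ P.r ^ 4 := Nat.le_self_pow (by norm_num) P.r
    linarith [Nat.le_mul_of_pos_right (P.r ^ 4) P.one_le_L]
  push_cast
  calc (P.r : ℝ) ^ 9 * ((P.r ^ 9).choose P.D * (1 / P.q : ℝ) ^ P.D)
      ≤ (P.r : ℝ) ^ 9 * (1 / 2) ^ (10 * P.r) := by
        gcongr
        exact hchoose.trans (pow_le_pow_of_le_one (by norm_num) (by norm_num) hD)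
    _ ≤ (1 / P.r : ℝ) := pow_nine_mul_half_pow_le hr_one
    _ ≤ 1 / 1000 := one_div_le_one_div_of_le (by norm_num) (by linarith [P.le_cast_r])

theorem sq_mul_choose_forty_mul_pow_le :
    ((P.r ^ 9 : ℕ) : ℝ) ^ 2 * ((P.r ^ 9).choose 40 * (1 / P.q : ℝ) ^ (2 * 40)) ≤
      1 / 1000 := by
  have hr := P.cast_r_pos
  have hq := P.cast_q_pos
  have hdensity : (P.r ^ 9 / P.q ^ 2 : ℝ) ^ 2 ≤ 1 / P.r := by
    calc (P.r ^ 9 / P.q ^ 2 : ℝ) ^ 2 ≤ (4 * P.L ^ 2 / P.r) ^ 2 := by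
          exact pow_le_pow_left₀ (by positivity) P.r_pow_div_q_sq_le 2
      _ = 16 * P.L ^ 4 / P.r * (1 / P.r : ℝ) := by ring
      _ ≤ 1 * (1 / P.r : ℝ) := by
          gcongr
          rw [div_le_one hr]
          linarith [P.pow_L_le_cast_r le_rfl, pow_pos P.cast_L_pos 4]
      _ = 1 / P.r := one_mul _
  push_cast
  calc ((P.r : ℝ) ^ 9) ^ 2 * ((P.r ^ 9).choose 40 * (1 / P.q : ℝ) ^ (2 * 40))
      ≤ ((P.r : ℝ) ^ 9) ^ 2 * ((P.r ^ 9) ^ 40 * (1 / P.q : ℝ) ^ (2 * 40)) := by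
        gcongr
        exact_mod_cast Nat.choose_le_pow _ _
    _ = ((P.r : ℝ) ^ 9) ^ 2 * ((P.r ^ 9 / P.q ^ 2) ^ 2) ^ 20 := by
        rw [one_div_pow]
        field_simp
    _ ≤ ((P.r : ℝ) ^ 9) ^ 2 * (1 / P.r) ^ 20 := by gcongr
    _ = 1 / (P.r : ℝ) ^ 2 := by field_simp
    _ ≤ 1 / 1000 := one_div_le_one_div_of_le (by norm_num) (by nlinarith [P.le_cast_r])

theorem uniformProb_not_rowRegular_zeros_le [DecidableEq X] (hX : Fintype.card X = P.r ^ 9)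
    (hV : Fintype.card V = P.r ^ 10) {π : V → X} (hb : ∀ y, #{v | π v = y} ≤ 10 * P.r) :
    uniformProb (fun f : X × X → Fin P.q =>
      ¬RowRegular (zeros f) π P.D 40 P.s P.a (1 / 32)) ≤ 1 / 100 := by
  have hsum := uniformProb_not_rowRegular_le (q := P.q) π (D := P.D) (K := 40) fun S hS =>
    P.uniformProb_sum_truncSq_rowCount_le hX hb hS
  rw [hX] at hsum
  linarith [P.mul_choose_D_mul_pow_le, P.sq_mul_choose_forty_mul_pow_le,
    P.card_powersetCard_mul_exp_le hV]

variable [LinearOrder X]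

theorem uniformProb_not_isSpread_le (hX : Fintype.card X = P.r ^ 9)
    (hV : Fintype.card V = P.r ^ 10) {π : V → X} (hb : ∀ y, #{v | π v = y} ≤ 10 * P.r) :
    uniformProb (fun f : X × X → Fin P.q => ¬IsSpread (upperGraph (zeros f)) π P.s) ≤
      1 / 50 := by
  have hrow := P.uniformProb_not_rowRegular_zeros_le hX hV hb
  have hcol := (uniformProb_comp_equiv ((Equiv.prodComm X X).arrowCongr (Equiv.refl (Fin P.q)))
    fun f => ¬RowRegular (zeros f) π P.D 40 P.s P.a (1 / 32)).trans_le hrow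
  have htranspose (f : X × X → Fin P.q) :
      zeros ((Equiv.prodComm X X).arrowCongr (Equiv.refl (Fin P.q)) f) =
        (zeros f).map (Equiv.prodComm X X) := by
    ext ⟨x, y⟩
    simp [mem_zeros]
  refine (uniformProb_mono fun f hf => ?_).trans
    ((uniformProb_or_le _ _).trans ((add_le_add hrow hcol).trans (by norm_num)))
  rw [htranspose, ← not_and_or]
  exact fun h => hf (isSpread_upperGraph hb h.1 h.2 P.a_pos.le P.s_mul_le_a_sq P.mul_D_le_s)

theorem two_pow_mul_exp_le {n : ℝ} (hn : (P.s : ℝ) ^ 2 ≤ 4 * n) :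
    2 ^ (3 * (256 * P.s * P.L ^ 2)) * Real.exp (-(n / (2 * P.q))) ≤
      Real.exp (-(256 * P.L ^ 2 * P.s)) := by
  have hq := P.cast_q_pos
  have hs := P.cast_s_pos
  have htwo : (2 : ℝ) ≤ Real.exp 1 := by linarith [Real.add_one_le_exp (1 : ℝ)]
  have hexponent : 2048 * P.L ^ 2 * P.s ≤ n / (2 * P.q) := by
    rw [le_div_iff₀ (by positivity)]
    nlinarith [(le_div_iff₀ hq).1 P.le_s_div_q]
  calc 2 ^ (3 * (256 * P.s * P.L ^ 2)) * Real.exp (-(n / (2 * P.q)))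
      ≤ Real.exp 1 ^ (3 * (256 * P.s * P.L ^ 2)) * Real.exp (-(2048 * P.L ^ 2 * P.s)) := by
        gcongr
    _ = Real.exp (-(1280 * P.L ^ 2 * P.s)) := by
        rw [← Real.exp_nat_mul, ← Real.exp_add]
        push_cast
        ring_nf
    _ ≤ Real.exp (-(256 * P.L ^ 2 * P.s)) := by
        gcongr
        norm_num

theorem choose_mul_pow_le_exp {n : ℕ} (hn : n ≤ P.s ^ 2 * P.r ^ 9) :
    n.choose (256 * P.s * P.L ^ 2) * (1 / P.q : ℝ) ^ (3 * (256 * P.s * P.L ^ 2)) ≤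
      Real.exp (-(256 * P.L ^ 2 * P.s)) := by
  have hr := P.cast_r_pos
  have hL := P.cast_L_pos
  have hq := P.cast_q_pos
  have hs := P.cast_s_pos
  have hthird : (1 / 3 : ℝ) ≤ Real.exp (-1) := by
    rw [Real.exp_neg, ← one_div]
    exact one_div_le_one_div_of_le (Real.exp_pos 1) Real.exp_one_lt_three.le
  have hdensity : (P.r ^ 9 / P.q ^ 2 * (P.s / P.q) : ℝ) ≤ P.L ^ 2 := by
    calc (P.r ^ 9 / P.q ^ 2 * (P.s / P.q) : ℝ) ≤ 4 * P.L ^ 2 / P.r * (32768 * P.L ^ 2) :=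
          mul_le_mul P.r_pow_div_q_sq_le P.s_div_q_le (by positivity) (by positivity)
      _ = P.L ^ 2 * (131072 * P.L ^ 2 / P.r : ℝ) := by ring
      _ ≤ P.L ^ 2 * (1 : ℝ) := by
          gcongr
          rw [div_le_one hr]
          linarith [P.pow_L_le_cast_r (i := 2) (by norm_num), pow_pos hL 2]
      _ = P.L ^ 2 := mul_one _
  have hmain : 3 * n * (1 / P.q : ℝ) ^ 3 ≤ Real.exp (-1) * (256 * P.s * P.L ^ 2 : ℕ) := by
    push_cast
    calc 3 * n * (1 / P.q : ℝ) ^ 3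
        ≤ 3 * (P.s ^ 2 * P.r ^ 9 : ℕ) * (1 / P.q : ℝ) ^ 3 := by gcongr
      _ = 3 * P.s * (P.r ^ 9 / P.q ^ 2 * (P.s / P.q) : ℝ) := by
          push_cast
          field_simp
      _ ≤ 3 * P.s * (P.L : ℝ) ^ 2 := by gcongr
      _ ≤ 1 / 3 * (256 * P.s * P.L ^ 2 : ℝ) := by
          linarith [mul_pos hs (pow_pos hL 2)]
      _ ≤ Real.exp (-1) * (256 * P.s * P.L ^ 2) := by gcongr
  have hpos : 0 < 256 * P.s * P.L ^ 2 :=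
    Nat.mul_pos (Nat.mul_pos (by norm_num) (mod_cast hs)) (pow_pos P.one_le_L 2)
  rw [pow_mul]
  refine (choose_mul_pow_le_pow hpos (by positivity) hmain).trans_eq ?_
  rw [← Real.exp_nat_mul]
  push_cast
  ring_nf

theorem uniformProb_disjoint_prune_triangles_le (hX : Fintype.card X = P.r ^ 9)
    {E : Finset (X × X)} (hE : P.s ^ 2 ≤ 4 * #E) (hE' : #E ≤ P.s ^ 2) :
    uniformProb (fun f : X × X → Fin P.q => Disjoint E (prune (triangles X) (zeros f))) ≤
      2 * Real.exp (-(256 * P.L ^ 2 * P.s)) := by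
  rw [two_mul]
  refine (uniformProb_disjoint_prune_zeros_le card_of_mem_triangles E (256 * P.s * P.L ^ 2)).trans
    (add_le_add (P.two_pow_mul_exp_le (mod_cast hE)) (P.choose_mul_pow_le_exp ?_))
  calc _ = #{T ∈ triangles X | ¬Disjoint T E} := by congr
    _ ≤ #E * Fintype.card X := card_triangles_meeting_le E
    _ ≤ P.s ^ 2 * P.r ^ 9 := by
      rw [hX]
      gcongr

theorem uniformProb_exists_disjoint_candidateEdges_le (hX : Fintype.card X = P.r ^ 9)
    (hV : Fintype.card V = P.r ^ 10) {π : Bool → V → X} {i c : Bool}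
    (hb : ∀ y, #{v | π (!i) v = y} ≤ 10 * P.r) {G : Bool × Bool → SimpleGraph X}
    (hG : ∀ z ≠ (i, c), IsSpread (G z) (π z.1) P.s) :
    uniformProb (fun f : X × X → Fin P.q => ∃ S ∈ powersetCard P.s (univ : Finset V),
      Set.InjOn (π i) S ∧ Disjoint (candidateEdges (π i) (Admissible π G i c) S)
        (prune (triangles X) (zeros f))) ≤ 1 / 1000 := by
  have htwo : (2 : ℝ) ≤ Real.exp 1 := by linarith [Real.add_one_le_exp (1 : ℝ)]
  have hexp : 2 * Real.exp (-(256 * P.L ^ 2 * P.s)) ≤ Real.exp (-(20 * P.L ^ 2 * P.s)) := by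
    calc 2 * Real.exp (-(256 * P.L ^ 2 * P.s))
        ≤ Real.exp 1 * Real.exp (-(256 * P.L ^ 2 * P.s)) := by gcongr
      _ ≤ Real.exp (-(20 * P.L ^ 2 * P.s)) := by
          rw [← Real.exp_add]
          gcongr
          nlinarith [P.le_cast_s, one_le_pow₀ (n := 2) P.one_le_cast_L]
  refine (uniformProb_exists_mem_le _ _ fun S hS => ?_).trans (P.card_powersetCard_mul_exp_le hV)
  have hS := (mem_powersetCard.1 hS).2
  refine uniformProb_const_and_le (by positivity) fun hinj => ?_
  exact (P.uniformProb_disjoint_prune_triangles_le hX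
    (sq_le_four_mul_card_candidateEdges hb P.mul_r_le_s hG hS hinj)
    (hS ▸ card_candidateEdges_le _ _ S)).trans hexp

end Scale

end RandomHosts

section Construction

open Finset

variable {X V : Type*} [LinearOrder X] [Fintype X] {q : ℕ} [NeZero q]

/-- The random host graphs: each edge is present independently with probability `1 / q`. -/
noncomputable def hostGraph (F : Bool × Bool → X × X → Fin q) (z : Bool × Bool) :
    SimpleGraph X :=
  upperGraph (zeros (F z))

/-- The triangle-free parts of the host graphs, obtained by deleting a maximal family of
edge-disjoint triangles. -/
noncomputable def prunedGraph (F : Bool × Bool → X × X → Fin q) (z : Bool × Bool) :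
    SimpleGraph X :=
  upperGraph (prune (triangles X) (zeros (F z)))

theorem prunedGraph_le_hostGraph (F : Bool × Bool → X × X → Fin q) :
    prunedGraph F ≤ hostGraph F := fun _ => upperGraph_mono (prune_subset _ _)

namespace Scale

variable (P : Scale) [Fintype V]

/-- Some `s`-set that embeds along the projection `π z.1` has no edge of colour `z.2` coming from
that projection. -/
def HasBareSet (π : Bool → V → X) (F : Bool × Bool → X × X → Fin P.q) (z : Bool × Bool) : Prop :=
  ∃ S ∈ powersetCard P.s (univ : Finset V), Set.InjOn (π z.1) S ∧
    Disjoint (candidateEdges (π z.1) (Admissible π (hostGraph F) z.1 z.2) S)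
      (prune (triangles X) (zeros (F z)))

variable {P}

theorem uniformProb_not_isSpread_hostGraph_le (hX : Fintype.card X = P.r ^ 9)
    (hV : Fintype.card V = P.r ^ 10) {π : Bool → V → X}
    (hb : ∀ i y, #{v | π i v = y} ≤ 10 * P.r) (z : Bool × Bool) :
    uniformProb (fun F : Bool × Bool → X × X → Fin P.q => ¬IsSpread (hostGraph F z) (π z.1) P.s) ≤
      1 / 50 := by
  refine uniformProb_pi_le_of_update z fun F => ?_
  simpa only [hostGraph, Function.update_self] using P.uniformProb_not_isSpread_le hX hV (hb z.1)

theorem uniformProb_isSpread_and_hasBareSet_le (hX : Fintype.card X = P.r ^ 9)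
    (hV : Fintype.card V = P.r ^ 10) {π : Bool → V → X}
    (hb : ∀ i y, #{v | π i v = y} ≤ 10 * P.r) (z : Bool × Bool) :
    uniformProb (fun F : Bool × Bool → X × X → Fin P.q =>
      (∀ z' ≠ z, IsSpread (hostGraph F z') (π z'.1) P.s) ∧ P.HasBareSet π F z) ≤ 1 / 1000 := by
  refine uniformProb_pi_le_of_update z fun F => ?_
  have hhost (f : X × X → Fin P.q) : ∀ z' ≠ z,
      hostGraph (Function.update F z f) z' = hostGraph F z' := fun z' hz' => by
    rw [hostGraph, hostGraph, Function.update_of_ne hz']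
  refine (uniformProb_mono fun f ⟨hspread, hbare⟩ => ⟨fun z' hz' => ?_, ?_⟩).trans
    (uniformProb_const_and_le (by norm_num) fun hG =>
      P.uniformProb_exists_disjoint_candidateEdges_le (c := z.2) (G := hostGraph F) hX hV
        (hb !z.1) hG)
  · exact hhost f z' hz' ▸ hspread z' hz'
  · simpa only [HasBareSet, Function.update_self, admissible_congr (hhost f)] using hbare

theorem exists_forall_not_hasBareSet (hX : Fintype.card X = P.r ^ 9)
    (hV : Fintype.card V = P.r ^ 10) {π : Bool → V → X}
    (hb : ∀ i y, #{v | π i v = y} ≤ 10 * P.r) :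
    ∃ F : Bool × Bool → X × X → Fin P.q, ∀ z, ¬P.HasBareSet π F z := by
  have hz (z : Bool × Bool) : z ∈ univ → uniformProb (fun F : Bool × Bool → X × X → Fin P.q =>
      ¬IsSpread (hostGraph F z) (π z.1) P.s ∨
        (∀ z' ≠ z, IsSpread (hostGraph F z') (π z'.1) P.s) ∧ P.HasBareSet π F z) ≤
      1 / 50 + 1 / 1000 := fun _ =>
    (uniformProb_or_le _ _).trans (add_le_add (uniformProb_not_isSpread_hostGraph_le hX hV hb z)
      (uniformProb_isSpread_and_hasBareSet_le hX hV hb z))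
  obtain ⟨F, hF⟩ := exists_not_of_uniformProb_lt_one
    ((uniformProb_exists_mem_le _ _ hz).trans_lt (by simp; norm_num))
  simp only [mem_univ, true_and, not_exists, not_or, not_not] at hF
  exact ⟨F, fun z hbare => (hF z).2 ⟨fun z' _ => (hF z').1, hbare⟩⟩

theorem exists_adj_of_not_hasBareSet {π : Bool → V → X} {F : Bool × Bool → X × X → Fin P.q}
    {i c : Bool} (hF : ¬P.HasBareSet π F (i, c)) {S : Finset V} (hS : P.s ≤ #(S.image (π i))) :
    ∃ u ∈ S, ∃ v ∈ S, (gluedGraph π (hostGraph F) (prunedGraph F) c).Adj u v := by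
  obtain ⟨T, hTS, hT, hinj⟩ := exists_injOn_subset_of_le_card_image hS
  obtain ⟨u, hu, v, hv, huv⟩ := exists_gluedGraph_adj (H := prunedGraph F) rfl fun hdisj =>
    hF ⟨T, mem_powersetCard.2 ⟨subset_univ T, hT⟩, hinj, hdisj⟩
  exact ⟨u, hTS hu, v, hTS hv, huv⟩

theorem exists_disjoint_cliqueFree_isIndepSet_card_lt (P : Scale) :
    ∃ G : Bool → SimpleGraph (Fin (P.r ^ 9) × Fin P.r), (∀ c, (G c).CliqueFree 3) ∧
      Disjoint (G true) (G false) ∧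
      ∀ c (S : Finset (Fin (P.r ^ 9) × Fin P.r)), (G c).IsIndepSet S → #S < 10 * P.s := by
  have hr : (3 : ℝ) ≤ P.r := by linarith [P.le_cast_r]
  have hX : Fintype.card (Fin (P.r ^ 9)) = P.r ^ 9 := Fintype.card_fin _
  have hV : Fintype.card (Fin (P.r ^ 9) × Fin P.r) = P.r ^ 10 := by
    rw [Fintype.card_prod, hX, Fintype.card_fin, ← pow_succ]
  have hfst (y : Fin (P.r ^ 9)) : #{v : Fin (P.r ^ 9) × Fin P.r | v.1 = y} ≤ P.r := by
    have himage : #({y} ×ˢ (univ : Finset (Fin P.r))) = P.r := by simp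
    refine (card_le_card fun v hv => ?_).trans himage.le
    simpa only [mem_product, mem_singleton, mem_univ, and_true] using (mem_filter.1 hv).2
  obtain ⟨g, hg, himage⟩ := exists_map_forall_le_card_image hX hV hfst (mod_cast hr)
    (mod_cast P.cast_s_pos) P.s_le_r_pow
  let π (i : Bool) : Fin (P.r ^ 9) × Fin P.r → Fin (P.r ^ 9) := cond i g Prod.fst
  have hπ : ∀ i y, #{v | π i v = y} ≤ 10 * P.r
    | true, y => hg y
    | false, y => (hfst y).trans (by omega)
  obtain ⟨F, hF⟩ := exists_forall_not_hasBareSet hX hV hπ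
  refine ⟨gluedGraph π (hostGraph F) (prunedGraph F),
    gluedGraph_cliqueFree (prunedGraph_le_hostGraph F) fun _ => cliqueFree_upperGraph_prune _,
    disjoint_gluedGraph (prunedGraph_le_hostGraph F) true, fun c S hindep => ?_⟩
  by_contra! hS
  obtain ⟨T, hTS, hT⟩ := exists_subset_card_eq hS
  obtain ⟨i, hi⟩ : ∃ i, P.s ≤ #(T.image (π i)) :=
    (himage T hT).elim (fun h => ⟨false, h⟩) fun h => ⟨true, h⟩
  obtain ⟨u, hu, v, hv, huv⟩ := exists_adj_of_not_hasBareSet (hF (i, c)) hi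
  exact hindep (hTS hu) (hTS hv) huv.ne huv

end Scale

end Construction

section Colorings

open Finset

variable {n : ℕ}

/-- The graph of the edges of colour `x`. -/
def colorGraph (c : Coloring n) (x : Col) : SimpleGraph (Fin n) where
  Adj u v := u ≠ v ∧ c.col u v = x
  symm := ⟨fun u v h => ⟨h.1.symm, c.symm u v ▸ h.2⟩⟩
  loopless := ⟨fun _ h => h.1 rfl⟩

theorem cliqueFree_colorGraph_iff {c : Coloring n} {x : Col} :
    (colorGraph c x).CliqueFree 3 ↔ ¬Contains c {x, x, x} := by
  rw [iff_not_comm, SimpleGraph.CliqueFree]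
  push Not
  constructor
  · rintro ⟨u, v, w, huv, hvw, huw, hpat⟩
    have hx : ∀ z ∈ triPattern c u v w, z = x := by simp [hpat]
    simp only [triPattern, Multiset.insert_eq_cons, Multiset.mem_cons,
      Multiset.mem_singleton, forall_eq_or_imp, forall_eq] at hx
    exact ⟨{u, v, w}, SimpleGraph.is3Clique_triple_iff.2 ⟨⟨huv, hx.1⟩, ⟨huw, hx.2.2⟩, hvw, hx.2.1⟩⟩
  · rintro ⟨s, hs⟩
    obtain ⟨u, v, w, huv, huw, hvw, -⟩ := SimpleGraph.is3Clique_iff.1 hs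
    exact ⟨u, v, w, huv.1, hvw.1, huw.1, by rw [triPattern, huv.2, hvw.2, huw.2]⟩

theorem avoids_Prrr_Pbbb_iff {c : Coloring n} : Avoids c {Prrr, Pbbb} ↔
    (colorGraph c Col.r).CliqueFree 3 ∧ (colorGraph c Col.b).CliqueFree 3 := by
  simp only [Avoids, Set.forall_mem_insert, Set.mem_singleton_iff, forall_eq,
    cliqueFree_colorGraph_iff, Prrr, Pbbb]

theorem twoColored_iff {c : Coloring n} {S : Finset (Fin n)} :
    TwoColored c S ↔ ∃ x, (colorGraph c x).IsIndepSet S := by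
  refine exists_congr fun x => forall₂_congr fun u _ => forall₂_congr fun v _ => ?_
  simp only [colorGraph, not_and]
  tauto

theorem h2_le {c : Coloring n} {k : ℕ}
    (h : ∀ x (S : Finset (Fin n)), (colorGraph c x).IsIndepSet S → #S ≤ k) : h2 c ≤ k := by
  refine csSup_le ⟨0, ∅, twoColored_iff.2 ⟨Col.r, by simp⟩, rfl⟩ ?_
  rintro _ ⟨S, hS, rfl⟩
  obtain ⟨x, hx⟩ := twoColored_iff.1 hS
  exact h x S hx

theorem indepNum_colorGraph_le_h2 (c : Coloring n) (x : Col) :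
    (colorGraph c x).indepNum ≤ h2 c := by
  obtain ⟨S, hS⟩ := (colorGraph c x).exists_isNIndepSet_indepNum
  refine le_csSup ⟨n, ?_⟩ ⟨S, twoColored_iff.2 ⟨x, hS.isIndepSet⟩, hS.card_eq⟩
  rintro _ ⟨T, -, rfl⟩
  exact card_le_univ T |>.trans_eq (Fintype.card_fin n)

theorem sqrt_mul_logb_le_h2n (hn : 256 ≤ n) :
    1 / 64 * Real.sqrt (n * Real.logb 2 n) ≤ h2n n {Prrr, Pbbb} := by
  have hyellow : ∃ c : Coloring n, Avoids c {Prrr, Pbbb} := by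
    refine ⟨⟨fun _ _ => Col.y, fun _ _ => rfl⟩, avoids_Prrr_Pbbb_iff.2 ⟨?_, ?_⟩⟩ <;>
    · intro s hs
      obtain ⟨u, v, w, huv, -⟩ := SimpleGraph.is3Clique_iff.1 hs
      cases huv.2
  obtain ⟨c, hc, hmin⟩ :=
    Nat.sInf_mem (hyellow.elim fun c hc => ⟨h2 c, c, hc, rfl⟩ :
      {m | ∃ c : Coloring n, Avoids c {Prrr, Pbbb} ∧ h2 c = m}.Nonempty)
  calc 1 / 64 * Real.sqrt (n * Real.logb 2 n) ≤ (colorGraph c Col.r).indepNum :=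
        sqrt_mul_logb_le_indepNum (avoids_Prrr_Pbbb_iff.1 hc).1 (Fintype.card_fin n) hn
    _ ≤ (h2 c : ℝ) := mod_cast indepNum_colorGraph_le_h2 c Col.r
    _ = h2n n {Prrr, Pbbb} := by rw [hmin, h2n]

section OfGraphs

open Classical in
/-- The colouring with red edges those of `R` and blue edges those of `B` outside `R`. -/
noncomputable def coloringOfGraphs (R B : SimpleGraph (Fin n)) : Coloring n where
  col u v := if R.Adj u v then Col.r else if B.Adj u v then Col.b else Col.y
  symm u v := by simp only [R.adj_comm, B.adj_comm]

variable {R B : SimpleGraph (Fin n)}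

theorem colorGraph_coloringOfGraphs_r : colorGraph (coloringOfGraphs R B) Col.r = R := by
  ext u v
  have := R.ne_of_adj (a := u) (b := v)
  simp only [colorGraph, coloringOfGraphs]
  grind

theorem colorGraph_coloringOfGraphs_b (h : Disjoint R B) :
    colorGraph (coloringOfGraphs R B) Col.b = B := by
  ext u v
  have := B.ne_of_adj (a := u) (b := v)
  have := SimpleGraph.disjoint_left.1 h u v
  simp only [colorGraph, coloringOfGraphs]
  grind

theorem colorGraph_coloringOfGraphs_y : colorGraph (coloringOfGraphs R B) Col.y = (R ⊔ B)ᶜ := by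
  ext u v
  simp only [colorGraph, coloringOfGraphs, SimpleGraph.compl_adj, SimpleGraph.sup_adj]
  grind

theorem card_le_of_isIndepSet_compl_sup {V : Type*} {R B : SimpleGraph V} (hR : R.CliqueFree 3)
    (hB : B.CliqueFree 3) {t : ℕ} (hRt : ∀ S : Finset V, R.IsIndepSet S → #S ≤ t)
    (hBt : ∀ S : Finset V, B.IsIndepSet S → #S ≤ t) {S : Finset V}
    (hS : (R ⊔ B)ᶜ.IsIndepSet S) : #S ≤ 2 * t + 1 := by
  classical
  obtain rfl | ⟨x, hx⟩ := S.eq_empty_or_nonempty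
  · simp
  have hRx : #{y ∈ S | R.Adj x y} ≤ t :=
    hRt _ ((SimpleGraph.isIndepSet_neighborSet_of_triangleFree R hR x).mono
      fun y hy => (mem_filter.1 hy).2)
  have hBx : #{y ∈ S | B.Adj x y} ≤ t :=
    hBt _ ((SimpleGraph.isIndepSet_neighborSet_of_triangleFree B hB x).mono
      fun y hy => (mem_filter.1 hy).2)
  have hcover : S ⊆ insert x ({y ∈ S | R.Adj x y} ∪ {y ∈ S | B.Adj x y}) := fun y hy => by
    have := hS hx hy
    simp only [SimpleGraph.compl_adj, SimpleGraph.sup_adj] at this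
    grind
  grw [hcover, card_insert_le, card_union_le, hRx, hBx]
  omega

theorem h2n_le_of_graphs (hRB : Disjoint R B) (hR : R.CliqueFree 3) (hB : B.CliqueFree 3) {t : ℕ}
    (hRt : ∀ S : Finset (Fin n), R.IsIndepSet S → #S ≤ t)
    (hBt : ∀ S : Finset (Fin n), B.IsIndepSet S → #S ≤ t) :
    h2n n {Prrr, Pbbb} ≤ 2 * t + 1 := by
  have havoid : Avoids (coloringOfGraphs R B) {Prrr, Pbbb} := by
    rw [avoids_Prrr_Pbbb_iff, colorGraph_coloringOfGraphs_r, colorGraph_coloringOfGraphs_b hRB]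
    exact ⟨hR, hB⟩
  have hh2n : h2n n {Prrr, Pbbb} ≤ h2 (coloringOfGraphs R B) := Nat.sInf_le ⟨_, havoid, rfl⟩
  refine hh2n.trans (h2_le fun x S hS => ?_)
  cases x with
  | r =>
    rw [colorGraph_coloringOfGraphs_r] at hS
    linarith [hRt S hS]
  | b =>
    rw [colorGraph_coloringOfGraphs_b hRB] at hS
    linarith [hBt S hS]
  | y =>
    rw [colorGraph_coloringOfGraphs_y] at hS
    exact card_le_of_isIndepSet_compl_sup hR hB hRt hBt hS

end OfGraphs

end Colorings

section UpperBound

open Finset Filter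

namespace Scale

theorem h2n_le (P : Scale) {n : ℕ} (hn : n ≤ P.r ^ 10) : h2n n {Prrr, Pbbb} ≤ 21 * P.s := by
  obtain ⟨G, hfree, hdisj, hindep⟩ := P.exists_disjoint_cliqueFree_isIndepSet_card_lt
  obtain ⟨φ⟩ : Nonempty (Fin n ↪ Fin (P.r ^ 9) × Fin P.r) :=
    Function.Embedding.nonempty_of_card_le (by simpa [← pow_succ] using hn)
  have hdisj_comap : Disjoint ((G true).comap φ) ((G false).comap φ) :=
    SimpleGraph.disjoint_left.2 fun _ _ h => SimpleGraph.disjoint_left.1 hdisj _ _ h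
  have hfree_comap (c : Bool) : ((G c).comap φ).CliqueFree 3 :=
    (hfree c).comap (SimpleGraph.Embedding.comap φ (G c)).toCopy.isContained
  have hindep_comap (c : Bool) (S : Finset (Fin n)) (hS : ((G c).comap φ).IsIndepSet S) :
      #S ≤ 10 * P.s := by
    have hmap : (G c).IsIndepSet (S.map φ) := by
      rw [coe_map]
      rintro _ ⟨u, hu, rfl⟩ _ ⟨v, hv, rfl⟩ huv
      exact hS hu hv fun h => huv (h ▸ rfl)
    simpa using (hindep c _ hmap).le
  have hs : 1 ≤ P.s := mod_cast P.cast_s_pos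
  have := h2n_le_of_graphs hdisj_comap (hfree_comap true) (hfree_comap false)
    (hindep_comap true) (hindep_comap false)
  omega

end Scale

theorem eventually_mul_sq_log_le (C : ℝ) : ∀ᶠ r : ℕ in atTop, C * Real.log r ^ 2 ≤ r := by
  obtain hC | hC := le_or_gt C 0
  · exact .of_forall fun r => (mul_nonpos_of_nonpos_of_nonneg hC (sq_nonneg _)).trans r.cast_nonneg
  have hbound := (Real.isLittleO_pow_log_id_atTop (n := 2)).bound (inv_pos.2 hC)
  filter_upwards [tendsto_natCast_atTop_atTop.eventually hbound] with r hr
  rw [id, Real.norm_of_nonneg (sq_nonneg _), Real.norm_of_nonneg r.cast_nonneg] at hr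
  exact (le_inv_mul_iff₀ hC).1 hr

theorem exists_pow_ge_and_pow_le_two_pow_mul {k n : ℕ} (hk : k ≠ 0) (hn : 2 ≤ n) :
    ∃ r ≤ n, n ≤ r ^ k ∧ r ^ k ≤ 2 ^ k * n := by
  have hex : ∃ r, n ≤ r ^ k := ⟨n, Nat.le_self_pow hk n⟩
  classical
  refine ⟨Nat.find hex, Nat.find_min' hex (Nat.le_self_pow hk n), Nat.find_spec hex, ?_⟩
  set r := Nat.find hex
  have hr : 2 ≤ r := (Nat.le_find_iff hex 2).2 fun m hm => by
    interval_cases m <;> simp [hk] <;> omega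
  have hpred : (r - 1) ^ k < n := not_le.1 (Nat.find_min hex (by omega : r - 1 < r))
  calc r ^ k ≤ (2 * (r - 1)) ^ k := Nat.pow_le_pow_left (by omega) k
    _ = 2 ^ k * (r - 1) ^ k := mul_pow ..
    _ ≤ 2 ^ k * n := by gcongr

theorem exists_scale {r : ℕ} (hr : 3 ≤ r) (hlog : 16 * 10 ^ 9 * Real.log r ^ 2 ≤ r) :
    ∃ P : Scale, P.r = r ∧ (P.L : ℝ) ≤ 2 * √(Real.log r) := by
  have hlog_one : 1 ≤ Real.log r := by
    have : (3 : ℝ) ≤ r := mod_cast hr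
    rw [Real.le_log_iff_exp_le (by linarith)]
    linarith [Real.exp_one_lt_three]
  have hsq : √(Real.log r) ^ 2 = Real.log r := Real.sq_sqrt (by linarith)
  have hsqrt : 1 ≤ √(Real.log r) := Real.one_le_sqrt.2 hlog_one
  have hle : √(Real.log r) ≤ ⌈√(Real.log r)⌉₊ := Nat.le_ceil _
  have hceil : (⌈√(Real.log r)⌉₊ : ℝ) ≤ 2 * √(Real.log r) := by
    linarith [Nat.ceil_lt_add_one (Real.sqrt_nonneg (Real.log r))]
  refine ⟨⟨r, ⌈√(Real.log r)⌉₊, mod_cast hsqrt.trans hle, ?_, ?_⟩, rfl, hceil⟩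
  · exact hsq.symm.trans_le (pow_le_pow_left₀ (by positivity) hle 2)
  · have : (10 : ℝ) ^ 9 * ⌈√(Real.log r)⌉₊ ^ 4 ≤ r :=
      calc (10 : ℝ) ^ 9 * ⌈√(Real.log r)⌉₊ ^ 4 ≤ 10 ^ 9 * (2 * √(Real.log r)) ^ 4 := by gcongr
        _ = 16 * 10 ^ 9 * (√(Real.log r) ^ 2) ^ 2 := by ring
        _ ≤ (r : ℝ) := by rwa [hsq]
    exact_mod_cast this

theorem log_le_logb_two {n : ℕ} : Real.log n ≤ Real.logb 2 n := by
  rw [Real.logb, le_div_iff₀ (Real.log_pos one_lt_two)]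
  exact mul_le_of_le_one_right (Real.log_natCast_nonneg n) (by linarith [Real.log_two_lt_d9])

theorem Scale.cast_s_le {P : Scale} {n : ℕ} (hrn : P.r ≤ n) (hr : P.r ^ 10 ≤ 1024 * n)
    (hL : (P.L : ℝ) ≤ 2 * √(Real.log P.r)) :
    (P.s : ℝ) ≤ 16384 * 64 * √(n * Real.logb 2 n) := by
  have hr_pos : (0 : ℝ) < P.r := by linarith [P.le_cast_r]
  have hr_sqrt : (P.r : ℝ) ^ 5 ≤ 32 * √n := by
    rw [← pow_le_pow_iff_left₀ (by positivity) (by positivity) two_ne_zero, mul_pow,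
      Real.sq_sqrt n.cast_nonneg, ← pow_mul]
    norm_num
    exact_mod_cast hr
  have hL_sqrt : (P.L : ℝ) ≤ 2 * √(Real.logb 2 n) := by
    refine hL.trans ?_
    gcongr
    exact (Real.log_le_log hr_pos (mod_cast hrn)).trans log_le_logb_two
  calc (P.s : ℝ) = 16384 * (P.r ^ 5 * P.L) := P.cast_s
    _ ≤ 16384 * (32 * √n * (2 * √(Real.logb 2 n))) := by gcongr
    _ = 16384 * 64 * √(n * Real.logb 2 n) := by
        rw [Real.sqrt_mul n.cast_nonneg]
        ring

theorem exists_forall_h2n_le_sqrt_mul_logb : ∃ n0 : ℕ, ∀ n : ℕ, n0 ≤ n →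
    (h2n n {Prrr, Pbbb} : ℝ) ≤ 21 * 16384 * 64 * √(n * Real.logb 2 n) := by
  obtain ⟨R, hR⟩ := eventually_atTop.1 (eventually_mul_sq_log_le (16 * 10 ^ 9))
  refine ⟨max R 3 ^ 10, fun n hn => ?_⟩
  have hRn : max R 3 ≤ n := (Nat.le_self_pow (by norm_num) _).trans hn
  obtain ⟨r, hrn, hnr, hr⟩ := exists_pow_ge_and_pow_le_two_pow_mul (k := 10) (by norm_num)
    (by omega : 2 ≤ n)
  have hRr : max R 3 ≤ r := (Nat.pow_le_pow_iff_left (by norm_num)).1 (hn.trans hnr)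
  obtain ⟨P, rfl, hL⟩ := exists_scale (le_of_max_le_right hRr) (hR r (le_of_max_le_left hRr))
  calc (h2n n {Prrr, Pbbb} : ℝ) ≤ 21 * P.s := mod_cast P.h2n_le hnr
    _ ≤ 21 * (16384 * 64 * √(n * Real.logb 2 n)) := by
        gcongr
        exact Scale.cast_s_le hrn hr hL
    _ = 21 * 16384 * 64 * √(n * Real.logb 2 n) := by ring

end UpperBound

theorem stmt4 :
    ∃ C1 C2 : ℝ, 0 < C1 ∧ 0 < C2 ∧ ∃ n0 : ℕ, ∀ n : ℕ, n0 ≤ n →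
      C1 * Real.sqrt (n * Real.logb 2 n) ≤ (h2n n {Prrr, Pbbb} : ℝ) ∧
      (h2n n {Prrr, Pbbb} : ℝ) ≤ C2 * Real.sqrt (n * Real.logb 2 n) := by
  obtain ⟨n0, hupper⟩ := exists_forall_h2n_le_sqrt_mul_logb
  exact ⟨1 / 64, 21 * 16384 * 64, by norm_num, by norm_num, max n0 256, fun n hn =>
    ⟨sqrt_mul_logb_le_h2n ((le_max_right _ _).trans hn), hupper n ((le_max_left _ _).trans hn)⟩⟩
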